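/- arXiv:1907.02655 — 2 statements merged into one kernel-verified Lean document; each statement's English description precedes it below -/
import Mathlib

section
/- Fix an integer N ≥ 4 and constants γ, μ ∈ (0,1/2). There is a constant C = C(N,γ,μ) > 0 with the following property. Let T > 0, ε > 0 and let φ : ℝ³ × [0,T) → ℝ be smooth with φ(·,t) Schwartz in x for each t, and suppose that for every t ∈ [0,T): Σ_{|I| ≤ N} ‖ √(w(|·| − t)) · |∂ Z^I φ|(·,t) ‖_{L²(ℝ³)} ≤ ε, the sum ranging over all products Z^I of at most N vector fields from 𝔏. Then for every multi-index I with |I| ≤ N − 3 and every (x,t) ∈ ℝ³ × [0,T), setting q := |x| − t: |∂ Z^I φ(x,t)| ≤ C ε (1 + t + |q|)^{-1} (1 + |q|)^{-1-γ} if q > 0, and |∂ Z^I φ(x,t)| ≤ C ε (1 + t + |q|)^{-1} (1 + |q|)^{-1/2} if q < 0. -/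
open MeasureTheory

/-- Operators on functions on `ℝ⁴` (coordinates `(x⁰,x¹,x²,x³) = (t,x)`). -/
abbrev Op : Type := ((Fin 4 → ℝ) → ℝ) → ((Fin 4 → ℝ) → ℝ)

/-- The coordinate partial derivative `∂_α f` on `ℝ⁴`. -/
noncomputable def pd (α : Fin 4) : Op :=
  fun f x => fderiv ℝ f x (Pi.single α 1)

/-- Lowering of the coordinate `x^α` by the Minkowski metric: `x_0 = -x^0`, `x_i = x^i`. -/
def lowerCoord (α : Fin 4) (x : Fin 4 → ℝ) : ℝ :=
  if α = 0 then -x 0 else x α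

/-- The Lorentz rotation/boost field `Ω_{αβ} f = -x_α ∂_β f + x_β ∂_α f`. -/
noncomputable def rotField (α β : Fin 4) : Op :=
  fun f x => -lowerCoord α x * pd β f x + lowerCoord β x * pd α f x

/-- The scaling vector field `S̃ f = t ∂_t f + ∑ᵢ xⁱ ∂ᵢ f = ∑_α x^α ∂_α f`. -/
noncomputable def scalingField : Op :=
  fun f x => ∑ α : Fin 4, x α * pd α f x

/-- Index type for the family `𝔏`: 4 translations, the rotations/boosts `Ω_{αβ}` (`α < β`),
and the scaling field. -/
abbrev LIdx : Type := Fin 4 ⊕ ({p : Fin 4 × Fin 4 // p.1 < p.2} ⊕ Unit)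

/-- The field of the family `𝔏` corresponding to an index. -/
noncomputable def opOf : LIdx → Op
  | Sum.inl α => pd α
  | Sum.inr (Sum.inl p) => rotField p.1.1 p.1.2
  | Sum.inr (Sum.inr _) => scalingField

/-- The product `Z^I = Z_{ι 0} ∘ ⋯ ∘ Z_{ι (k-1)}` of fields of `𝔏`, applied to `φ`. -/
noncomputable def applyVec {k : ℕ} (ι : Fin k → LIdx) (φ : (Fin 4 → ℝ) → ℝ) :
    (Fin 4 → ℝ) → ℝ :=
  ((List.finRange k).map fun j => opOf (ι j)).foldr (fun T g => T g) φ

/-- The pointwise norm `|∂ g| = max_α |∂_α g|` of the space-time gradient. -/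
noncomputable def gradNorm (g : (Fin 4 → ℝ) → ℝ) (x : Fin 4 → ℝ) : ℝ :=
  Finset.univ.sup' Finset.univ_nonempty (fun α : Fin 4 => |pd α g x|)

/-- The weight `w(q)`: `1 + (1+|q|)^{1+2γ}` for `q ≥ 0` and `1 + (1+|q|)^{-2μ}` for `q < 0`. -/
noncomputable def wgt (γ μ q : ℝ) : ℝ :=
  if 0 ≤ q then 1 + (1 + |q|) ^ (1 + 2 * γ) else 1 + (1 + |q|) ^ (-(2 * μ))

/-- The point of `ℝ^{1+3}` with time coordinate `t` and space coordinate `y`. -/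
noncomputable def pt (t : ℝ) (y : EuclideanSpace ℝ (Fin 3)) : Fin 4 → ℝ :=
  Fin.cons t (fun i => y i)

/-!
The one-dimensional Sobolev inequality on an interval of length `L` costs one derivative of size
`1 / L`; applied along three transversal families of curves it bounds a density at a point by its
integral over a box. The density is `∑_{|I| ≤ k} |∇Z^I φ|²`; since the commutators `[∂_α, Z]` are
constant multiples of translations, a derivative of it in a direction spanned by the fields of `𝔏`
is bounded by the density of order `k + 1`.

Write `q = |y| - t`. Contracting with `x` gives `(x·x) ∂_β = x_β S̃ - ∑_α x^α Ω_{αβ}`, where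
`x·x = q (|y| + t)`, so every translation is bounded by `(1 + |q|)⁻¹` times the fields: all three
directions of a cube of side `∼ 1 + |q|` are controlled. The rotations moreover control the angular
directions on the scale `|y|`. The cube suffices when `1 + t + |q| ≲ 1 + |q|`; otherwise
`1 + t + |q| ≲ |y|` and a slab over a piece of the sphere of radius `|y|` is used. In both cases the
volume of the box is `∼ (1 + t + |q|)² (1 + |q|)`, and `q` varies in it by at most
`(1 + |q|) / 2`, so that the weight is bounded below by a multiple of its value at the centre.
-/

open Finset
open scoped ContDiff

local notation "ℝ³" => EuclideanSpace ℝ (Fin 3)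

section Fields

variable {f g : (Fin 4 → ℝ) → ℝ} {x : Fin 4 → ℝ} {n : WithTop ℕ∞}

lemma contDiff_pd (hg : ContDiff ℝ (n + 1) g) (α : Fin 4) : ContDiff ℝ n (pd α g) :=
  (hg.fderiv_right le_rfl).clm_apply contDiff_const

lemma contDiff_lowerCoord (α : Fin 4) : ContDiff ℝ n (lowerCoord α) := by
  unfold lowerCoord
  split_ifs <;> fun_prop

lemma contDiff_opOf (hg : ContDiff ℝ (n + 1) g) : ∀ Z : LIdx, ContDiff ℝ n (opOf Z g)
  | .inl α => contDiff_pd hg α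
  | .inr (.inl ⟨(α, β), _⟩) =>
    ((contDiff_lowerCoord α).neg.mul (contDiff_pd hg β)).add
      ((contDiff_lowerCoord β).mul (contDiff_pd hg α))
  | .inr (.inr _) =>
    show ContDiff ℝ n fun x : Fin 4 → ℝ => ∑ α, x α * pd α g x from
      ContDiff.sum fun α _ => (contDiff_apply ℝ ℝ α).mul (contDiff_pd hg α)

lemma applyVec_cons {k : ℕ} (Z : LIdx) (ι : Fin k → LIdx) (φ : (Fin 4 → ℝ) → ℝ) :
    applyVec (Fin.cons Z ι : Fin (k + 1) → LIdx) φ = opOf Z (applyVec ι φ) := by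
  simp [applyVec, List.finRange_succ, Function.comp_def]

lemma contDiff_applyVec {φ : (Fin 4 → ℝ) → ℝ} {k : ℕ} (hφ : ContDiff ℝ (n + k) φ)
    (ι : Fin k → LIdx) : ContDiff ℝ n (applyVec ι φ) := by
  induction ι using Fin.consInduction generalizing n with
  | elim0 => simpa [applyVec] using hφ
  | cons Z ι ih =>
    rw [applyVec_cons]
    refine contDiff_opOf (ih ?_) Z
    rwa [add_assoc, add_comm 1, ← Nat.cast_add_one]

lemma pd_add (hf : DifferentiableAt ℝ f x) (hg : DifferentiableAt ℝ g x) (α : Fin 4) :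
    pd α (fun y => f y + g y) x = pd α f x + pd α g x := by
  simp [pd, fderiv_fun_add hf hg]

lemma pd_mul (hf : DifferentiableAt ℝ f x) (hg : DifferentiableAt ℝ g x) (α : Fin 4) :
    pd α (fun y => f y * g y) x = pd α f x * g x + f x * pd α g x := by
  simp only [pd, fderiv_fun_mul hf hg, add_apply, smul_apply, smul_eq_mul]
  ring

lemma pd_neg (f : (Fin 4 → ℝ) → ℝ) (x : Fin 4 → ℝ) (α : Fin 4) :
    pd α (fun y => -f y) x = -pd α f x := by
  simp only [pd, fderiv_fun_neg, neg_apply]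

lemma pd_coord (α β : Fin 4) (x : Fin 4 → ℝ) :
    pd α (fun y => y β) x = if α = β then 1 else 0 := by
  simp [pd, (hasFDerivAt_apply (𝕜 := ℝ) (F' := fun _ : Fin 4 => ℝ) β x).fderiv, Pi.single_apply,
    eq_comm]

lemma pd_lowerCoord (α β : Fin 4) (x : Fin 4 → ℝ) :
    pd α (lowerCoord β) x = if α = β then (if β = 0 then -1 else 1) else 0 := by
  by_cases hβ : β = 0
  · have : lowerCoord β = fun y => -y 0 := by funext y; simp [lowerCoord, hβ]
    rw [this, pd_neg, pd_coord, hβ]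
    by_cases hα : α = 0 <;> simp [hα]
  · have : lowerCoord β = fun y => y β := by funext y; simp [lowerCoord, hβ]
    simp [this, pd_coord, hβ]

lemma pd_pd_comm (hg : ContDiff ℝ 2 g) (α β : Fin 4) (x : Fin 4 → ℝ) :
    pd α (pd β g) x = pd β (pd α g) x := by
  have hd : DifferentiableAt ℝ (fderiv ℝ g) x :=
    (hg.fderiv_right (m := 1) (by norm_num)).differentiable one_ne_zero x
  have second_deriv : ∀ a b : Fin 4, pd a (pd b g) x =
      fderiv ℝ (fderiv ℝ g) x (Pi.single a 1) (Pi.single b 1) := fun a b => by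
    unfold pd
    simp [fderiv_clm_apply hd (differentiableAt_const _)]
  rw [second_deriv, second_deriv]
  exact hg.contDiffAt.isSymmSndFDerivAt minSmoothness_of_isRCLikeNormedField.le _ _

lemma differentiable_pd (hg : ContDiff ℝ 2 g) (α : Fin 4) : Differentiable ℝ (pd α g) :=
  (contDiff_pd (n := 1) hg α).differentiable one_ne_zero

lemma pd_rotField (hg : ContDiff ℝ 2 g) (γ α β : Fin 4) (x : Fin 4 → ℝ) :
    pd γ (rotField α β g) x = rotField α β (pd γ g) x +
      (-pd γ (lowerCoord α) x * pd β g x + pd γ (lowerCoord β) x * pd α g x) := by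
  have dα := differentiable_pd hg α x
  have dβ := differentiable_pd hg β x
  have lα : DifferentiableAt ℝ (lowerCoord α) x :=
    (contDiff_lowerCoord (n := 1) α).differentiable one_ne_zero x
  have lβ : DifferentiableAt ℝ (lowerCoord β) x :=
    (contDiff_lowerCoord (n := 1) β).differentiable one_ne_zero x
  unfold rotField
  rw [pd_add (lα.fun_neg.fun_mul dβ) (lβ.fun_mul dα), pd_mul lα.fun_neg dβ, pd_mul lβ dα, pd_neg,
    pd_pd_comm hg γ α, pd_pd_comm hg γ β]
  ring

lemma pd_scalingField (hg : ContDiff ℝ 2 g) (γ : Fin 4) (x : Fin 4 → ℝ) :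
    pd γ (scalingField g) x = scalingField (pd γ g) x + pd γ g x := by
  have hd : ∀ α, DifferentiableAt ℝ (fun y : Fin 4 → ℝ => y α * pd α g y) x := fun α =>
    (differentiableAt_apply α x).fun_mul (differentiable_pd hg α x)
  have pd_term : ∀ α, pd γ (fun y => y α * pd α g y) x =
      x α * pd α (pd γ g) x + if γ = α then pd α g x else 0 := fun α => by
    rw [pd_mul (differentiableAt_apply α x) (differentiable_pd hg α x), pd_coord,
      pd_pd_comm hg]
    split_ifs <;> ring
  have pd_sum : pd γ (scalingField g) x = ∑ α, pd γ (fun y => y α * pd α g y) x := by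
    change fderiv ℝ (fun y => ∑ α, y α * pd α g y) x (Pi.single γ 1) = _
    rw [fderiv_fun_sum fun α _ => hd α, _root_.sum_apply]
    rfl
  simp [pd_sum, pd_term, scalingField, sum_add_distrib]

lemma abs_pd_le_gradNorm (g : (Fin 4 → ℝ) → ℝ) (x : Fin 4 → ℝ) (α : Fin 4) :
    |pd α g x| ≤ gradNorm g x :=
  le_sup' (fun α => |pd α g x|) (mem_univ α)

lemma gradNorm_nonneg (g : (Fin 4 → ℝ) → ℝ) (x : Fin 4 → ℝ) : 0 ≤ gradNorm g x :=
  (abs_nonneg _).trans (abs_pd_le_gradNorm g x 0)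

/-- Each commutator `[∂_α, Z]` is either `0` or some `±∂_β`. -/
lemma abs_pd_opOf_sub_opOf_pd_le (hg : ContDiff ℝ 2 g) (Z : LIdx) (α : Fin 4) (x : Fin 4 → ℝ) :
    |pd α (opOf Z g) x - opOf Z (pd α g) x| ≤ gradNorm g x := by
  have h0 := gradNorm_nonneg g x
  match Z with
  | .inl β => simpa [opOf, pd_pd_comm hg α β] using h0
  | .inr (.inl ⟨(β, δ), hβδ⟩) =>
    have hβ := abs_pd_le_gradNorm g x β
    have hδ := abs_pd_le_gradNorm g x δ
    simp only [opOf, pd_rotField hg, add_sub_cancel_left, pd_lowerCoord]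
    have : β ≠ δ := hβδ.ne
    split_ifs <;> simp_all
  | .inr (.inr _) => simpa [opOf, pd_scalingField hg] using abs_pd_le_gradNorm g x α

lemma abs_opOf_pd_le (hg : ContDiff ℝ 2 g) (Z : LIdx) (α : Fin 4) (x : Fin 4 → ℝ) :
    |opOf Z (pd α g) x| ≤ gradNorm (opOf Z g) x + gradNorm g x := by
  have hcomm := abs_pd_opOf_sub_opOf_pd_le hg Z α x
  have htri := abs_sub (pd α (opOf Z g) x) (pd α (opOf Z g) x - opOf Z (pd α g) x)
  rw [sub_sub_cancel] at htri
  linarith [abs_pd_le_gradNorm (opOf Z g) x α]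

end Fields

section Energy

variable {φ g : (Fin 4 → ℝ) → ℝ} {x v : Fin 4 → ℝ} {c : ℝ} {k : ℕ}

/-- The Euclidean square `|∇g|²` of the space-time gradient, a smooth substitute for
`gradNorm g ^ 2`. -/
noncomputable def gradSq (g : (Fin 4 → ℝ) → ℝ) (x : Fin 4 → ℝ) : ℝ :=
  ∑ α, pd α g x ^ 2

lemma gradSq_nonneg (g : (Fin 4 → ℝ) → ℝ) (x : Fin 4 → ℝ) : 0 ≤ gradSq g x :=
  sum_nonneg fun _ _ => sq_nonneg _

lemma gradNorm_sq_le_gradSq (g : (Fin 4 → ℝ) → ℝ) (x : Fin 4 → ℝ) :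
    gradNorm g x ^ 2 ≤ gradSq g x := by
  obtain ⟨α, -, hα⟩ := exists_mem_eq_sup' univ_nonempty fun α => |pd α g x|
  rw [gradNorm, hα, sq_abs]
  exact single_le_sum (f := fun α => pd α g x ^ 2) (fun _ _ => sq_nonneg _) (mem_univ α)

lemma gradSq_le (g : (Fin 4 → ℝ) → ℝ) (x : Fin 4 → ℝ) : gradSq g x ≤ 4 * gradNorm g x ^ 2 := by
  have h : ∀ α ∈ univ, pd α g x ^ 2 ≤ gradNorm g x ^ 2 := fun α _ =>
    sq_le_sq' (abs_le.1 (abs_pd_le_gradNorm g x α)).1 (abs_le.1 (abs_pd_le_gradNorm g x α)).2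
  simpa [gradSq] using sum_le_card_nsmul _ _ _ h

lemma contDiff_gradSq {n : WithTop ℕ∞} (hg : ContDiff ℝ (n + 1) g) : ContDiff ℝ n (gradSq g) :=
  ContDiff.sum fun α _ => (contDiff_pd hg α).pow 2

/-- The derivative at `x` in direction `v` is bounded by `c` times the fields of `𝔏`. -/
def ControlledByFields (x v : Fin 4 → ℝ) (c : ℝ) : Prop :=
  ∀ h : (Fin 4 → ℝ) → ℝ, |fderiv ℝ h x v| ≤ c * ∑ Z : LIdx, |opOf Z h x|

lemma ControlledByFields.mono {c' : ℝ} (hv : ControlledByFields x v c) (hcc' : c ≤ c') :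
    ControlledByFields x v c' := fun h =>
  (hv h).trans (mul_le_mul_of_nonneg_right hcc' (sum_nonneg fun _ _ => abs_nonneg _))

lemma card_LIdx : Fintype.card LIdx = 11 := by decide

lemma ControlledByFields.abs_fderiv_gradSq_le (hv : ControlledByFields x v c) (hc : 0 ≤ c)
    (hg : ContDiff ℝ 2 g) :
    |fderiv ℝ (gradSq g) x v| ≤ c * (132 * gradSq g x + 4 * ∑ Z : LIdx, gradSq (opOf Z g) x) := by
  set G := gradNorm g x
  have pd_term : ∀ α ∈ univ, |2 * pd α g x * fderiv ℝ (pd α g) x v| ≤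
      c * ∑ Z : LIdx, (3 * gradSq g x + gradSq (opOf Z g) x) := fun α _ => calc
    |2 * pd α g x * fderiv ℝ (pd α g) x v| ≤
        2 * G * (c * ∑ Z : LIdx, (gradNorm (opOf Z g) x + G)) := by
      rw [abs_mul, abs_mul, abs_two]
      gcongr
      · exact mul_nonneg zero_le_two (gradNorm_nonneg g x)
      · exact abs_pd_le_gradNorm g x α
      · refine (hv _).trans ?_
        gcongr with Z
        exact abs_opOf_pd_le hg Z α x
    _ = c * ∑ Z : LIdx, 2 * G * (gradNorm (opOf Z g) x + G) := by
      rw [mul_left_comm, mul_sum]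
    _ ≤ _ := by
      gcongr with Z
      have hG := gradNorm_sq_le_gradSq g x
      have hGZ := gradNorm_sq_le_gradSq (opOf Z g) x
      nlinarith [sq_nonneg (G - gradNorm (opOf Z g) x)]
  have fderiv_eq : fderiv ℝ (gradSq g) x v = ∑ α, 2 * pd α g x * fderiv ℝ (pd α g) x v := by
    change fderiv ℝ (fun y => ∑ α, pd α g y ^ 2) x v = _
    rw [fderiv_fun_sum fun α _ => (differentiable_pd hg α x).fun_pow 2, _root_.sum_apply]
    simp [fderiv_fun_pow 2 (differentiable_pd hg _ x)]
  rw [fderiv_eq]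
  refine (abs_sum_le_sum_abs _ _).trans ((sum_le_card_nsmul _ _ _ pd_term).trans_eq ?_)
  simp only [sum_add_distrib, sum_const, card_univ, card_LIdx, Fintype.card_fin, nsmul_eq_mul]
  push_cast
  ring

/-- The density `∑_{|I| ≤ k} |∇Z^I φ|²`, whose pointwise values are bounded by its integrals of
higher order. -/
noncomputable def energyDensity (φ : (Fin 4 → ℝ) → ℝ) (k : ℕ) (x : Fin 4 → ℝ) : ℝ :=
  ∑ m ∈ range (k + 1), ∑ ι : Fin m → LIdx, gradSq (applyVec ι φ) x

lemma energyDensity_mono (φ : (Fin 4 → ℝ) → ℝ) (x : Fin 4 → ℝ) :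
    Monotone fun k => energyDensity φ k x := fun _ _ hkl =>
  sum_le_sum_of_subset_of_nonneg (range_subset_range.2 (by gcongr))
    fun _ _ _ => sum_nonneg fun _ _ => gradSq_nonneg _ _

lemma energyDensity_nonneg (φ : (Fin 4 → ℝ) → ℝ) (k : ℕ) (x : Fin 4 → ℝ) :
    0 ≤ energyDensity φ k x :=
  sum_nonneg fun _ _ => sum_nonneg fun _ _ => gradSq_nonneg _ _

lemma gradNorm_sq_le_energyDensity (φ : (Fin 4 → ℝ) → ℝ) (ι : Fin k → LIdx) (x : Fin 4 → ℝ) :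
    gradNorm (applyVec ι φ) x ^ 2 ≤ energyDensity φ k x :=
  calc gradNorm (applyVec ι φ) x ^ 2 ≤ gradSq (applyVec ι φ) x := gradNorm_sq_le_gradSq _ _
    _ ≤ ∑ ι : Fin k → LIdx, gradSq (applyVec ι φ) x :=
      single_le_sum (f := fun ι => gradSq (applyVec ι φ) x)
        (fun _ _ => gradSq_nonneg _ _) (mem_univ ι)
    _ ≤ energyDensity φ k x :=
      single_le_sum (f := fun m => ∑ ι : Fin m → LIdx, gradSq (applyVec ι φ) x)
        (fun _ _ => sum_nonneg fun _ _ => gradSq_nonneg _ _) (self_mem_range_succ k)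

lemma contDiff_energyDensity {n : ℕ} (hφ : ContDiff ℝ (n + 1 + k : ℕ) φ) :
    ContDiff ℝ n (energyDensity φ k) := by
  refine ContDiff.sum fun m hm => ContDiff.sum fun ι _ => contDiff_gradSq ?_
  refine contDiff_applyVec (hφ.of_le ?_) ι
  exact_mod_cast Nat.add_le_add_left (mem_range_succ_iff.1 hm) (n + 1)

lemma sum_gradSq_opOf_le_energyDensity (φ : (Fin 4 → ℝ) → ℝ) (k : ℕ) (x : Fin 4 → ℝ) :
    ∑ m ∈ range (k + 1), ∑ ι : Fin m → LIdx, ∑ Z : LIdx, gradSq (opOf Z (applyVec ι φ)) x ≤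
      energyDensity φ (k + 1) x := by
  have reindex : ∀ m, ∑ ι : Fin (m + 1) → LIdx, gradSq (applyVec ι φ) x =
      ∑ ι : Fin m → LIdx, ∑ Z : LIdx, gradSq (opOf Z (applyVec ι φ)) x := fun m => by
    rw [← (Fin.consEquiv fun _ : Fin (m + 1) => LIdx).sum_comp, Fintype.sum_prod_type_right]
    exact sum_congr rfl fun ι _ => sum_congr rfl fun Z _ => by
      rw [← applyVec_cons]; rfl
  rw [energyDensity, sum_range_succ' _ (k + 1)]
  simp only [reindex]
  exact le_add_of_nonneg_right (sum_nonneg fun _ _ => gradSq_nonneg _ _)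

lemma ControlledByFields.abs_fderiv_energyDensity_le (hv : ControlledByFields x v c) (hc : 0 ≤ c)
    (hφ : ContDiff ℝ (k + 2 : ℕ) φ) :
    |fderiv ℝ (energyDensity φ k) x v| ≤ 136 * c * energyDensity φ (k + 1) x := by
  have hC : ∀ m ∈ range (k + 1), ∀ ι : Fin m → LIdx, ContDiff ℝ 2 (applyVec ι φ) := fun m hm ι => by
    refine contDiff_applyVec (hφ.of_le ?_) ι
    rw [add_comm]
    exact_mod_cast Nat.add_le_add_right (mem_range_succ_iff.1 hm) 2
  have hD : ∀ m ∈ range (k + 1), ∀ ι : Fin m → LIdx,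
      DifferentiableAt ℝ (gradSq (applyVec ι φ)) x := fun m hm ι =>
    (contDiff_gradSq (n := 1) (hC m hm ι)).differentiable one_ne_zero x
  have fderiv_eq : fderiv ℝ (energyDensity φ k) x v =
      ∑ m ∈ range (k + 1), ∑ ι : Fin m → LIdx, fderiv ℝ (gradSq (applyVec ι φ)) x v := by
    change fderiv ℝ (fun y => ∑ m ∈ range (k + 1), ∑ ι : Fin m → LIdx,
      gradSq (applyVec ι φ) y) x v = _
    rw [fderiv_fun_sum fun m hm => DifferentiableAt.fun_sum fun ι _ => hD m hm ι,
      _root_.sum_apply]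
    refine sum_congr rfl fun m hm => ?_
    rw [fderiv_fun_sum fun ι _ => hD m hm ι, _root_.sum_apply]
  have hsucc := sum_gradSq_opOf_le_energyDensity φ k x
  have hmono := energyDensity_mono φ x k.le_succ
  calc |fderiv ℝ (energyDensity φ k) x v|
      ≤ ∑ m ∈ range (k + 1), ∑ ι : Fin m → LIdx, |fderiv ℝ (gradSq (applyVec ι φ)) x v| := by
        rw [fderiv_eq]
        refine (abs_sum_le_sum_abs _ _).trans ?_
        gcongr
        exact abs_sum_le_sum_abs _ _
    _ ≤ ∑ m ∈ range (k + 1), ∑ ι : Fin m → LIdx, c * (132 * gradSq (applyVec ι φ) x +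
          4 * ∑ Z : LIdx, gradSq (opOf Z (applyVec ι φ)) x) := by
        gcongr with m hm ι
        exact hv.abs_fderiv_gradSq_le hc (hC m hm ι)
    _ = c * (132 * energyDensity φ k x + 4 * ∑ m ∈ range (k + 1), ∑ ι : Fin m → LIdx,
          ∑ Z : LIdx, gradSq (opOf Z (applyVec ι φ)) x) := by
        simp only [energyDensity, mul_sum, sum_add_distrib, mul_add]
    _ ≤ c * (132 * energyDensity φ (k + 1) x + 4 * energyDensity φ (k + 1) x) := by gcongr
    _ = 136 * c * energyDensity φ (k + 1) x := by ring

end Energy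

section Curves

open Set (Icc)

/-- Compare `h a` with a value of `h` that is at most its mean. -/
lemma le_integral_of_abs_deriv_le {h h' F : ℝ → ℝ} {a L c : ℝ} (hL : 0 < L)
    (hF : ContinuousOn F (Icc a (a + L))) (hh : ∀ s ∈ Icc a (a + L), HasDerivAt h (h' s) s)
    (hle : ∀ s ∈ Icc a (a + L), h s ≤ F s) (hle' : ∀ s ∈ Icc a (a + L), |h' s| ≤ c / L * F s) :
    h a ≤ (1 + c) / L * ∫ s in Icc a (a + L), F s := by
  have hFint : IntegrableOn F (Icc a (a + L)) := hF.integrableOn_Icc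
  have hcont : ContinuousOn h (Icc a (a + L)) := fun s hs =>
    (hh s hs).continuousAt.continuousWithinAt
  have hvol : volume.real (Icc a (a + L)) = L := by simp [hL.le]
  obtain ⟨s, hs, hsmean⟩ := exists_le_setAverage
    (by simp [hL] : volume (Icc a (a + L)) ≠ 0) (by simp) hcont.integrableOn_Icc
  have hmean : h s ≤ L⁻¹ * ∫ s in Icc a (a + L), F s := by
    rw [setAverage_eq, hvol, smul_eq_mul] at hsmean
    refine hsmean.trans ?_
    exact mul_le_mul_of_nonneg_left
      (setIntegral_mono_on hcont.integrableOn_Icc hFint measurableSet_Icc hle) (by positivity)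
  have hsub : Icc a s ⊆ Icc a (a + L) := Set.Icc_subset_Icc_right hs.2
  have hincr : -h s - -h a ≤ ∫ s in Icc a s, c / L * F s := by
    rw [integral_Icc_eq_integral_Ioc, ← intervalIntegral.integral_of_le hs.1]
    exact intervalIntegral.sub_le_integral_of_hasDeriv_right_of_le hs.1
      (hcont.mono hsub).neg
      (fun r hr => (hh r (hsub ⟨hr.1.le, hr.2.le⟩)).neg.hasDerivWithinAt)
      ((hFint.mono_set hsub).const_mul _)
      (fun r hr => (neg_le_abs _).trans (hle' r (hsub ⟨hr.1.le, hr.2.le⟩)))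
  have hext : ∫ s in Icc a s, c / L * F s ≤ c / L * ∫ s in Icc a (a + L), F s := by
    rw [← integral_const_mul]
    refine setIntegral_mono_set (hFint.const_mul _) ?_ hsub.eventuallyLE
    filter_upwards [ae_restrict_mem measurableSet_Icc] with r hr
    exact (abs_nonneg _).trans (hle' r hr)
  calc h a ≤ L⁻¹ * (∫ s in Icc a (a + L), F s) + c / L * ∫ s in Icc a (a + L), F s := by linarith
    _ = (1 + c) / L * ∫ s in Icc a (a + L), F s := by ring

variable {φ : (Fin 4 → ℝ) → ℝ} {k : ℕ}

lemma continuous_energyDensity (hφ : ContDiff ℝ (k + 1 : ℕ) φ) :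
    Continuous (energyDensity φ k) :=
  (contDiff_energyDensity (n := 0) (by rwa [zero_add, add_comm])).continuous

/-- The curve `p`, run over `[a, a + L]`, has a velocity bounded by the fields of `𝔏` at the scale
`L`: an interval of length `L` then costs only a constant number of fields. -/
def ControlledCurve (p : ℝ → Fin 4 → ℝ) (a L : ℝ) : Prop :=
  ∀ s ∈ Icc a (a + L), ∃ v, HasDerivAt p v s ∧ ControlledByFields (p s) v (2 / L)

lemma energyDensity_le_lintegral_curve (hφ : ContDiff ℝ (k + 2 : ℕ) φ)
    {p : ℝ → Fin 4 → ℝ} {a L : ℝ} (hL : 0 < L) (hp : ControlledCurve p a L) :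
    ENNReal.ofReal (energyDensity φ k (p a)) ≤
      ENNReal.ofReal (273 / L) *
        ∫⁻ s in Icc a (a + L), ENNReal.ofReal (energyDensity φ (k + 1) (p s)) := by
  choose! p' hp' hctl using hp
  have hpc : ContinuousOn p (Icc a (a + L)) := fun s hs =>
    (hp' s hs).continuousAt.continuousWithinAt
  have hF : ContinuousOn (fun s => energyDensity φ (k + 1) (p s)) (Icc a (a + L)) :=
    (continuous_energyDensity hφ).comp_continuousOn hpc
  have hdiff : Differentiable ℝ (energyDensity φ k) :=
    (contDiff_energyDensity (n := 1) (by rwa [add_comm])).differentiable one_ne_zero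
  have hsob := le_integral_of_abs_deriv_le (c := 272) hL hF
    (fun s hs => (hdiff (p s)).hasFDerivAt.comp_hasDerivAt s (hp' s hs))
    (fun s _ => energyDensity_mono φ (p s) k.le_succ)
    (fun s hs => ((hctl s hs).abs_fderiv_energyDensity_le (by positivity) hφ).trans_eq (by ring))
  rw [← ofReal_integral_eq_lintegral_ofReal hF.integrableOn_Icc
    (.of_forall fun _ => energyDensity_nonneg φ _ _), ← ENNReal.ofReal_mul (by positivity)]
  exact ENNReal.ofReal_le_ofReal (hsob.trans_eq (by norm_num))

lemma energyDensity_le_lintegral_box (hφ : ContDiff ℝ (k + 4 : ℕ) φ)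
    {Γ : ℝ → ℝ → ℝ → Fin 4 → ℝ} {b₀ c₀ u₀ B C U : ℝ} (hB : 0 < B) (hC : 0 < C) (hU : 0 < U)
    (hb : ControlledCurve (fun b => Γ b c₀ u₀) b₀ B)
    (hc : ∀ b ∈ Icc b₀ (b₀ + B), ControlledCurve (fun c => Γ b c u₀) c₀ C)
    (hu : ∀ b ∈ Icc b₀ (b₀ + B), ∀ c ∈ Icc c₀ (c₀ + C), ControlledCurve (Γ b c) u₀ U) :
    ENNReal.ofReal (energyDensity φ k (Γ b₀ c₀ u₀)) ≤
      ENNReal.ofReal (273 ^ 3 / (B * C * U)) *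
        ∫⁻ b in Icc b₀ (b₀ + B), ∫⁻ c in Icc c₀ (c₀ + C), ∫⁻ u in Icc u₀ (u₀ + U),
          ENNReal.ofReal (energyDensity φ (k + 3) (Γ b c u)) := by
  have hconst : ENNReal.ofReal (273 ^ 3 / (B * C * U)) = ENNReal.ofReal (273 / B) *
      (ENNReal.ofReal (273 / C) * ENNReal.ofReal (273 / U)) := by
    rw [← ENNReal.ofReal_mul (by positivity), ← ENNReal.ofReal_mul (by positivity)]
    congr 1
    field_simp
  rw [hconst, mul_assoc, ← lintegral_const_mul' _ _ (by finiteness)]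
  refine (energyDensity_le_lintegral_curve (hφ.of_le (Nat.cast_le.2 (by lia))) hB hb).trans ?_
  refine mul_le_mul_right (setLIntegral_mono' measurableSet_Icc fun b hb => ?_) _
  rw [mul_assoc, ← lintegral_const_mul' _ _ (by finiteness)]
  refine (energyDensity_le_lintegral_curve (k := k + 1) (hφ.of_le (Nat.cast_le.2 (by lia)))
    hC (hc b hb)).trans ?_
  refine mul_le_mul_right (setLIntegral_mono' measurableSet_Icc fun c hc => ?_) _
  exact energyDensity_le_lintegral_curve hφ hU (hu b hb c hc)

end Curves

section Control

variable {t : ℝ} {y : ℝ³}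

lemma pt_zero (t : ℝ) (y : ℝ³) : pt t y 0 = t := rfl

lemma pt_succ (t : ℝ) (y : ℝ³) (i : Fin 3) : pt t y i.succ = y i := rfl

lemma abs_opOf_le_sum (h : (Fin 4 → ℝ) → ℝ) (x : Fin 4 → ℝ) (Z : LIdx) :
    |opOf Z h x| ≤ ∑ Z : LIdx, |opOf Z h x| :=
  single_le_sum (f := fun Z => |opOf Z h x|) (fun _ _ => abs_nonneg _) (mem_univ Z)

lemma abs_rotField_le_sum (h : (Fin 4 → ℝ) → ℝ) (x : Fin 4 → ℝ) (α β : Fin 4) :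
    |rotField α β h x| ≤ ∑ Z : LIdx, |opOf Z h x| := by
  have hswap : rotField α β h x = -rotField β α h x := by simp only [rotField]; ring
  rcases lt_trichotomy α β with hαβ | rfl | hαβ
  · exact abs_opOf_le_sum h x (.inr (.inl ⟨(α, β), hαβ⟩))
  · rw [self_eq_neg.1 hswap, abs_zero]
    exact sum_nonneg fun _ _ => abs_nonneg _
  · rw [hswap, abs_neg]
    exact abs_opOf_le_sum h x (.inr (.inl ⟨(β, α), hαβ⟩))

lemma abs_pt_le (ht : 0 ≤ t) (y : ℝ³) (α : Fin 4) : |pt t y α| ≤ ‖y‖ + t := by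
  cases α using Fin.cases with
  | zero => rw [pt_zero, abs_of_nonneg ht]; exact le_add_of_nonneg_left (norm_nonneg y)
  | succ i => exact (PiLp.norm_apply_le y i).trans (le_add_of_nonneg_right ht)

lemma abs_lowerCoord_le (x : Fin 4 → ℝ) (α : Fin 4) : |lowerCoord α x| ≤ |x α| := by
  unfold lowerCoord
  split_ifs with h <;> simp [h]

lemma sum_mul_lowerCoord_pt (t : ℝ) (y : ℝ³) :
    ∑ α, pt t y α * lowerCoord α (pt t y) = (‖y‖ - t) * (‖y‖ + t) := by
  have hnorm : ∑ i, y i ^ 2 = ‖y‖ ^ 2 := by simp [EuclideanSpace.norm_sq_eq]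
  simp only [Fin.sum_univ_succ (n := 3), lowerCoord, pt_zero, pt_succ, Fin.succ_ne_zero, if_true,
    if_false, ← sq, hnorm]
  ring

/-- Contracting with `x` recovers the translations from the other fields off the light cone. -/
lemma sum_mul_lowerCoord_mul_pd (h : (Fin 4 → ℝ) → ℝ) (x : Fin 4 → ℝ) (β : Fin 4) :
    (∑ α, x α * lowerCoord α x) * pd β h x =
      lowerCoord β x * scalingField h x - ∑ α, x α * rotField α β h x := by
  simp only [scalingField, rotField, sum_mul, mul_sum, ← sum_sub_distrib]
  exact sum_congr rfl fun α _ => by ring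

lemma mul_abs_pd_le (ht : 0 ≤ t) (h : (Fin 4 → ℝ) → ℝ) (y : ℝ³) (β : Fin 4) :
    (1 + |‖y‖ - t|) * |pd β h (pt t y)| ≤ 6 * ∑ Z : LIdx, |opOf Z h (pt t y)| := by
  set M := ∑ Z : LIdx, |opOf Z h (pt t y)|
  have hpd : |pd β h (pt t y)| ≤ M := abs_opOf_le_sum h _ (.inl β)
  have hcontract : |‖y‖ - t| * (‖y‖ + t) * |pd β h (pt t y)| ≤ 5 * M * (‖y‖ + t) := calc
    _ = |lowerCoord β (pt t y) * scalingField h (pt t y) -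
          ∑ α, pt t y α * rotField α β h (pt t y)| := by
      rw [← sum_mul_lowerCoord_mul_pd, sum_mul_lowerCoord_pt, abs_mul, abs_mul,
        abs_of_nonneg (add_nonneg (norm_nonneg y) ht)]
    _ ≤ (‖y‖ + t) * M + ∑ _α : Fin 4, (‖y‖ + t) * M := by
      refine (abs_sub _ _).trans (add_le_add ?_ ((abs_sum_le_sum_abs _ _).trans ?_))
      · rw [abs_mul]
        gcongr
        · exact (abs_lowerCoord_le _ β).trans (abs_pt_le ht y β)
        · exact abs_opOf_le_sum h _ (.inr (.inr ()))
      · gcongr with α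
        rw [abs_mul]
        gcongr
        · exact abs_pt_le ht y α
        · exact abs_rotField_le_sum h _ α β
    _ = 5 * M * (‖y‖ + t) := by simp; ring
  rcases (add_nonneg (norm_nonneg y) ht).eq_or_lt with h0 | hpos
  · have : ‖y‖ - t = 0 := by linarith [norm_nonneg y]
    rw [this, abs_zero]
    linarith [abs_nonneg (pd β h (pt t y))]
  · have : |‖y‖ - t| * |pd β h (pt t y)| ≤ 5 * M :=
      le_of_mul_le_mul_right (by linarith) hpos
    linarith

lemma controlledByFields_single (ht : 0 ≤ t) (y : ℝ³) (β : Fin 4) :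
    ControlledByFields (pt t y) (Pi.single β 1) (6 / (1 + |‖y‖ - t|)) := fun h => by
  rw [div_mul_eq_mul_div, le_div_iff₀' (by positivity)]
  exact mul_abs_pd_le ht h y β

lemma controlledByFields_rotation {i j : Fin 3} (hi : y i ≠ 0) :
    ControlledByFields (pt t y)
      (-(y j / y i) • Pi.single i.succ 1 + Pi.single j.succ 1) |y i|⁻¹ := fun h => by
  have hrot : fderiv ℝ h (pt t y) (-(y j / y i) • Pi.single i.succ 1 + Pi.single j.succ 1) =
      -(y i)⁻¹ * rotField i.succ j.succ h (pt t y) := by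
    simp only [map_add, map_smul, smul_eq_mul, rotField, lowerCoord, Fin.succ_ne_zero, if_false,
      pt_succ, pd]
    field_simp
    ring
  rw [hrot, abs_mul, abs_neg, abs_inv]
  gcongr
  exact abs_rotField_le_sum h _ _ _

end Control

section GraphCoordinates

/-- The point of `ℝ³` with `i`-th coordinate `u` and remaining coordinates `b`, `c`, in order. -/
noncomputable def graphPt (i : Fin 3) (u b c : ℝ) : ℝ³ :=
  WithLp.toLp 2 (i.insertNth (α := fun _ => ℝ) u ![b, c])

variable (i : Fin 3) (u b c : ℝ)

@[simp] lemma graphPt_self : graphPt i u b c i = u := by simp [graphPt]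

@[simp] lemma graphPt_succAbove_zero : graphPt i u b c (i.succAbove 0) = b := by simp [graphPt]

@[simp] lemma graphPt_succAbove_one : graphPt i u b c (i.succAbove 1) = c := by simp [graphPt]

lemma graphPt_apply_coords (y : ℝ³) :
    graphPt i (y i) (y (i.succAbove 0)) (y (i.succAbove 1)) = y := by
  ext j
  cases j using i.succAboveCases with
  | x => simp
  | p j => fin_cases j <;> simp

lemma norm_graphPt_sq : ‖graphPt i u b c‖ ^ 2 = u ^ 2 + b ^ 2 + c ^ 2 := by
  simp [EuclideanSpace.norm_sq_eq, Fin.sum_univ_succAbove _ i, add_assoc]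

lemma norm_graphPt_le : ‖graphPt i u b c‖ ≤ |u| + |b| + |c| := by
  refine le_of_sq_le_sq ?_ (by positivity)
  rw [norm_graphPt_sq, ← sq_abs u, ← sq_abs b, ← sq_abs c]
  nlinarith [abs_nonneg u, abs_nonneg b, abs_nonneg c, mul_nonneg (abs_nonneg u) (abs_nonneg b),
    mul_nonneg (abs_nonneg u) (abs_nonneg c), mul_nonneg (abs_nonneg b) (abs_nonneg c)]

lemma graphPt_sub_graphPt (u' b' c' : ℝ) :
    graphPt i u b c - graphPt i u' b' c' = graphPt i (u - u') (b - b') (c - c') := by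
  ext j
  cases j using i.succAboveCases with
  | x => simp
  | p j => fin_cases j <;> simp

lemma abs_norm_graphPt_sub_norm_graphPt_le (u' b' c' : ℝ) :
    |‖graphPt i u b c‖ - ‖graphPt i u' b' c'‖| ≤ |u - u'| + |b - b'| + |c - c'| :=
  (abs_norm_sub_norm_le _ _).trans (graphPt_sub_graphPt i u b c u' b' c' ▸ norm_graphPt_le ..)

lemma pt_graphPt (t : ℝ) : pt t (graphPt i u b c) = t • Pi.single 0 1 + u • Pi.single i.succ 1 +
    b • Pi.single (i.succAbove 0).succ 1 + c • Pi.single (i.succAbove 1).succ 1 := by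
  funext α
  cases α using Fin.cases with
  | zero => simp [pt_zero]
  | succ j =>
    rw [pt_succ]
    cases j using i.succAboveCases with
    | x => simp
    | p j => fin_cases j <;> simp

lemma hasDerivAt_pt_graphPt (t : ℝ) {f g h : ℝ → ℝ} {f' g' h' s : ℝ} (hf : HasDerivAt f f' s)
    (hg : HasDerivAt g g' s) (hh : HasDerivAt h h' s) :
    HasDerivAt (fun s => pt t (graphPt i (f s) (g s) (h s)))
      (f' • Pi.single i.succ 1 + g' • Pi.single (i.succAbove 0).succ 1 +
        h' • Pi.single (i.succAbove 1).succ 1) s := by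
  simp only [pt_graphPt]
  refine (((hasDerivAt_const s _).add (hf.smul_const _)).add (hg.smul_const _)).add
    (hh.smul_const _) |>.congr_deriv ?_
  rw [zero_add]

lemma lintegral_eq_lintegral_graphPt {F : ℝ³ → ENNReal} (hF : Measurable F) :
    ∫⁻ y, F y = ∫⁻ b : ℝ, ∫⁻ c : ℝ, ∫⁻ u : ℝ, F (graphPt i u b c) := by
  have hToPi := PiLp.volume_preserving_toLp (Fin 3)
  have hSplit := (volume_preserving_piFinSuccAbove (fun _ : Fin 3 => ℝ) i).symm
  have hPair := (volume_preserving_finTwoArrow ℝ).symm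
  have hFtoPi : Measurable fun y : Fin 3 → ℝ => F (WithLp.toLp 2 y) := hF.comp hToPi.measurable
  have hFsplit : Measurable fun p : ℝ × (Fin 2 → ℝ) =>
      F (WithLp.toLp 2 ((MeasurableEquiv.piFinSuccAbove (fun _ : Fin 3 => ℝ) i).symm p)) :=
    hFtoPi.comp hSplit.measurable
  have hFpair := hFsplit.lintegral_prod_left' (μ := volume)
  rw [← hToPi.lintegral_comp hF, ← hSplit.lintegral_comp hFtoPi,
    Measure.volume_eq_prod, lintegral_prod_symm _ hFsplit.aemeasurable,
    ← hPair.lintegral_comp hFpair, Measure.volume_eq_prod]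
  exact lintegral_prod _ (hFpair.comp hPair.measurable).aemeasurable

/-- By translation invariance in `u` the graph function `ψ` need not even be measurable. -/
lemma lintegral_slab_le_setLIntegral {F : ℝ³ → ENNReal} (hF : Measurable F) {S : Set ℝ³}
    (hS : MeasurableSet S) {B C U : Set ℝ} (hB : MeasurableSet B) (hC : MeasurableSet C)
    (hU : MeasurableSet U) (ψ : ℝ → ℝ → ℝ)
    (hmem : ∀ b ∈ B, ∀ c ∈ C, ∀ u ∈ U, graphPt i (ψ b c + u) b c ∈ S) :
    ∫⁻ b in B, ∫⁻ c in C, ∫⁻ u in U, F (graphPt i (ψ b c + u) b c) ≤ ∫⁻ y in S, F y := by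
  rw [← lintegral_indicator hS, lintegral_eq_lintegral_graphPt i (hF.indicator hS)]
  refine (setLIntegral_mono' hB fun b hb => ?_).trans (setLIntegral_le_lintegral _ _)
  refine (setLIntegral_mono' hC fun c hc => ?_).trans (setLIntegral_le_lintegral _ _)
  rw [← lintegral_add_left_eq_self (fun u => S.indicator F (graphPt i u b c)) (ψ b c)]
  refine (setLIntegral_mono' hU fun u hu => ?_).trans (setLIntegral_le_lintegral _ _)
  rw [Set.indicator_of_mem (hmem b hb c hc u hu)]

end GraphCoordinates

section Shell

open Set (Icc)

variable {φ : (Fin 4 → ℝ) → ℝ} {k : ℕ} {t : ℝ}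

/-- The closed spherical shell of radius `r` and half-width `δ`. -/
def shell (r δ : ℝ) : Set ℝ³ := {y | |‖y‖ - r| ≤ δ}

lemma measurableSet_shell (r δ : ℝ) : MeasurableSet (shell r δ) :=
  (isClosed_le (by fun_prop) continuous_const).measurableSet

lemma continuous_pt (t : ℝ) : Continuous (pt t) :=
  continuous_pi (Fin.cases continuous_const fun i => PiLp.continuous_apply 2 _ i)

/-- Inside the shell `1 + ||z| - t|` is comparable to its value at radius `r`, which makes every
coordinate direction controlled. -/
lemma controlledCurve_of_hasDerivAt_single (ht : 0 ≤ t) {p : ℝ → ℝ³} {β : Fin 4} {a r : ℝ}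
    (hp : ∀ s ∈ Icc a (a + (1 + |r - t|) / 6),
      HasDerivAt (fun s => pt t (p s)) (Pi.single β 1) s)
    (hmem : ∀ s ∈ Icc a (a + (1 + |r - t|) / 6), p s ∈ shell r ((1 + |r - t|) / 2)) :
    ControlledCurve (fun s => pt t (p s)) a ((1 + |r - t|) / 6) := by
  refine fun s hs => ⟨_, hp s hs, (controlledByFields_single ht (p s) β).mono ?_⟩
  have hs_mem : |‖p s‖ - r| ≤ (1 + |r - t|) / 2 := hmem s hs
  have htri := abs_sub_le r ‖p s‖ t
  rw [abs_sub_comm r ‖p s‖] at htri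
  rw [div_le_div_iff₀ (by positivity) (by positivity)]
  linarith

lemma energyDensity_le_lintegral_shell_of_graph (hφ : ContDiff ℝ (k + 4 : ℕ) φ) (ht : 0 ≤ t)
    (i : Fin 3) {ψ : ℝ → ℝ → ℝ} {b₀ c₀ L r : ℝ} (hL : 0 < L)
    (hb : ControlledCurve (fun b => pt t (graphPt i (ψ b c₀) b c₀)) b₀ L)
    (hc : ∀ b ∈ Icc b₀ (b₀ + L), ControlledCurve (fun c => pt t (graphPt i (ψ b c) b c)) c₀ L)
    (hmem : ∀ b ∈ Icc b₀ (b₀ + L), ∀ c ∈ Icc c₀ (c₀ + L), ∀ u ∈ Icc 0 ((1 + |r - t|) / 6),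
      graphPt i (ψ b c + u) b c ∈ shell r ((1 + |r - t|) / 2)) :
    ENNReal.ofReal (energyDensity φ k (pt t (graphPt i (ψ b₀ c₀) b₀ c₀))) ≤
      ENNReal.ofReal (273 ^ 3 / (L * L * ((1 + |r - t|) / 6))) *
        ∫⁻ z in shell r ((1 + |r - t|) / 2), ENNReal.ofReal (energyDensity φ (k + 3) (pt t z)) := by
  have hu : ∀ b ∈ Icc b₀ (b₀ + L), ∀ c ∈ Icc c₀ (c₀ + L), ControlledCurve
      (fun u => pt t (graphPt i (ψ b c + u) b c)) 0 ((1 + |r - t|) / 6) := fun b hb c hc => by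
    refine controlledCurve_of_hasDerivAt_single (β := i.succ) ht (fun u _ => ?_) ?_
    · simpa using hasDerivAt_pt_graphPt i t ((hasDerivAt_id u).const_add (ψ b c))
        (hasDerivAt_const u b) (hasDerivAt_const u c)
    · simpa using hmem b hb c hc
  have hbox := energyDensity_le_lintegral_box (u₀ := 0) (b₀ := b₀) (c₀ := c₀)
    (Γ := fun b c u => pt t (graphPt i (ψ b c + u) b c)) hφ hL hL (by positivity)
    (by simpa using hb) (by simpa using hc) hu
  simp only [add_zero, zero_add] at hbox
  refine hbox.trans (mul_le_mul_right ?_ _)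
  refine lintegral_slab_le_setLIntegral i (F := fun z =>
    ENNReal.ofReal (energyDensity φ (k + 3) (pt t z))) ?_ (measurableSet_shell _ _)
    measurableSet_Icc measurableSet_Icc measurableSet_Icc ψ hmem
  exact ((continuous_energyDensity hφ).comp (continuous_pt t)).measurable.ennreal_ofReal

lemma energyDensity_le_lintegral_shell_flat (hφ : ContDiff ℝ (k + 4 : ℕ) φ) (ht : 0 ≤ t)
    (y : ℝ³) :
    ENNReal.ofReal (energyDensity φ k (pt t y)) ≤
      ENNReal.ofReal (273 ^ 3 / ((1 + |‖y‖ - t|) / 6) ^ 3) *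
        ∫⁻ z in shell ‖y‖ ((1 + |‖y‖ - t|) / 2),
          ENNReal.ofReal (energyDensity φ (k + 3) (pt t z)) := by
  set Q := 1 + |‖y‖ - t|
  set b₀ := y (Fin.succAbove 0 0)
  set c₀ := y (Fin.succAbove 0 1)
  have hy : graphPt 0 (y 0) b₀ c₀ = y := graphPt_apply_coords 0 y
  have hQ : 0 < Q := by positivity
  have hmem : ∀ b ∈ Icc b₀ (b₀ + Q / 6), ∀ c ∈ Icc c₀ (c₀ + Q / 6), ∀ u ∈ Icc 0 (Q / 6),
      graphPt 0 (y 0 + u) b c ∈ shell ‖y‖ (Q / 2) := fun b hb c hc u hu => by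
    have hdist := abs_norm_graphPt_sub_norm_graphPt_le 0 (y 0 + u) b c (y 0) b₀ c₀
    rw [hy, add_sub_cancel_left, abs_of_nonneg hu.1, abs_of_nonneg (sub_nonneg.2 hb.1),
      abs_of_nonneg (sub_nonneg.2 hc.1)] at hdist
    exact hdist.trans (by linarith [hu.2, hb.2, hc.2])
  have h0 : (0 : ℝ) ∈ Icc 0 (Q / 6) := ⟨le_rfl, by positivity⟩
  have hc₀ : c₀ ∈ Icc c₀ (c₀ + Q / 6) := ⟨le_rfl, by linarith⟩
  have hb : ControlledCurve (fun b => pt t (graphPt 0 (y 0) b c₀)) b₀ (Q / 6) := by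
    refine controlledCurve_of_hasDerivAt_single (β := Fin.succ (Fin.succAbove 0 0)) ht
      (fun b _ => ?_) (fun b hb => by simpa using hmem b hb c₀ hc₀ 0 h0)
    simpa using hasDerivAt_pt_graphPt 0 t (hasDerivAt_const b (y 0)) (hasDerivAt_id b)
      (hasDerivAt_const b c₀)
  have hc : ∀ b ∈ Icc b₀ (b₀ + Q / 6),
      ControlledCurve (fun c => pt t (graphPt 0 (y 0) b c)) c₀ (Q / 6) := fun b hb => by
    refine controlledCurve_of_hasDerivAt_single (β := Fin.succ (Fin.succAbove 0 1)) ht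
      (fun c _ => ?_) (fun c hc => by simpa using hmem b hb c hc 0 h0)
    simpa using hasDerivAt_pt_graphPt 0 t (hasDerivAt_const c (y 0)) (hasDerivAt_const c b)
      (hasDerivAt_id c)
  have hgraph := energyDensity_le_lintegral_shell_of_graph (ψ := fun _ _ => y 0) hφ ht 0
    (by positivity) hb hc hmem
  rwa [hy, ← pow_three'] at hgraph

end Shell

section Sphere

open Set (Icc)

/-- The hemisphere of radius `r` as a graph over the `(b, c)`-plane; the sign `s = ±1` selects the
side. -/
noncomputable def sphereGraph (s r b c : ℝ) : ℝ :=
  s * √(r ^ 2 - b ^ 2 - c ^ 2)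

variable {φ : (Fin 4 → ℝ) → ℝ} {k : ℕ} {s r b c t : ℝ}

lemma sphereGraph_comm (s r b c : ℝ) : sphereGraph s r b c = sphereGraph s r c b := by
  rw [sphereGraph, sphereGraph, sub_right_comm]

lemma sphereGraph_sq (hs : s ^ 2 = 1) (h : 0 ≤ r ^ 2 - b ^ 2 - c ^ 2) :
    sphereGraph s r b c ^ 2 = r ^ 2 - b ^ 2 - c ^ 2 := by
  rw [sphereGraph, mul_pow, hs, Real.sq_sqrt h, one_mul]

lemma norm_graphPt_sphereGraph (i : Fin 3) (hs : s ^ 2 = 1) (hr : 0 ≤ r)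
    (h : 0 ≤ r ^ 2 - b ^ 2 - c ^ 2) : ‖graphPt i (sphereGraph s r b c) b c‖ = r := by
  rw [← sq_eq_sq₀ (norm_nonneg _) hr, norm_graphPt_sq, sphereGraph_sq hs h]
  ring

lemma hasDerivAt_sphereGraph (hs : s ^ 2 = 1) (h : 0 < r ^ 2 - b ^ 2 - c ^ 2) :
    HasDerivAt (fun b => sphereGraph s r b c) (-(b / sphereGraph s r b c)) b := by
  have hrad : HasDerivAt (fun b : ℝ => r ^ 2 - b ^ 2 - c ^ 2) (-(2 * b)) b := by
    simpa using ((hasDerivAt_pow 2 b).const_sub (r ^ 2)).sub_const (c ^ 2)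
  refine ((hrad.sqrt h.ne').const_mul s).congr_deriv ?_
  have hs0 : s ≠ 0 := by rintro rfl; simp at hs
  have hsqrt : √(r ^ 2 - b ^ 2 - c ^ 2) ≠ 0 := (Real.sqrt_pos.2 h).ne'
  rw [sphereGraph]
  field_simp
  rw [hs, one_mul]

lemma sphereGraph_ne_zero (hs : s ^ 2 = 1) (h : 0 < r ^ 2 - b ^ 2 - c ^ 2) :
    sphereGraph s r b c ≠ 0 := fun h0 => by
  rw [← sphereGraph_sq hs h.le, h0] at h
  norm_num at h

lemma inv_abs_sphereGraph_le {L : ℝ} (hs : s ^ 2 = 1) (hL : 0 < L)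
    (h : L ^ 2 ≤ r ^ 2 - b ^ 2 - c ^ 2) : |sphereGraph s r b c|⁻¹ ≤ 2 / L := by
  have hle : L ≤ |sphereGraph s r b c| := by
    rw [← sphereGraph_sq hs ((sq_nonneg L).trans h)] at h
    exact (le_abs_self L).trans (sq_le_sq.1 h)
  calc |sphereGraph s r b c|⁻¹ ≤ L⁻¹ := by gcongr
    _ ≤ 2 / L := by rw [← one_div]; gcongr; norm_num

/-- Moving along the sphere `|x| = r` is a rotation. -/
lemma controlledCurve_sphereGraph_left (i : Fin 3) (t : ℝ) {b₀ L : ℝ} (hs : s ^ 2 = 1)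
    (hL : 0 < L) (h : ∀ b ∈ Icc b₀ (b₀ + L), L ^ 2 ≤ r ^ 2 - b ^ 2 - c ^ 2) :
    ControlledCurve (fun b => pt t (graphPt i (sphereGraph s r b c) b c)) b₀ L := fun b hb => by
  have hpos := (pow_pos hL 2).trans_le (h b hb)
  have hrot := controlledByFields_rotation (t := t) (y := graphPt i (sphereGraph s r b c) b c)
    (i := i) (j := i.succAbove 0) (by simpa using sphereGraph_ne_zero hs hpos)
  refine ⟨_, hasDerivAt_pt_graphPt i t (hasDerivAt_sphereGraph hs hpos) (hasDerivAt_id b)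
    (hasDerivAt_const b c), ?_⟩
  simp only [graphPt_self, graphPt_succAbove_zero] at hrot
  simpa using hrot.mono (inv_abs_sphereGraph_le hs hL (h b hb))

lemma controlledCurve_sphereGraph_right (i : Fin 3) (t : ℝ) {c₀ L : ℝ} (hs : s ^ 2 = 1)
    (hL : 0 < L) (h : ∀ c ∈ Icc c₀ (c₀ + L), L ^ 2 ≤ r ^ 2 - b ^ 2 - c ^ 2) :
    ControlledCurve (fun c => pt t (graphPt i (sphereGraph s r b c) b c)) c₀ L := fun c hc => by
  have hpos := (pow_pos hL 2).trans_le (h c hc)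
  have hderiv : HasDerivAt (fun c => sphereGraph s r b c) (-(c / sphereGraph s r b c)) c := by
    simp only [sphereGraph_comm s r b]
    exact hasDerivAt_sphereGraph hs (by linarith)
  have hrot := controlledByFields_rotation (t := t) (y := graphPt i (sphereGraph s r b c) b c)
    (i := i) (j := i.succAbove 1) (by simpa using sphereGraph_ne_zero hs hpos)
  refine ⟨_, hasDerivAt_pt_graphPt i t hderiv (hasDerivAt_const c b) (hasDerivAt_id c), ?_⟩
  simp only [graphPt_self, graphPt_succAbove_one] at hrot
  simpa using hrot.mono (inv_abs_sphereGraph_le hs hL (h c hc))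

lemma graphPt_sphereGraph_add_mem_shell (i : Fin 3) {u δ : ℝ} (hs : s ^ 2 = 1) (hr : 0 ≤ r)
    (h : 0 ≤ r ^ 2 - b ^ 2 - c ^ 2) (hu : |u| ≤ δ) :
    graphPt i (sphereGraph s r b c + u) b c ∈ shell r δ := by
  have hdist := abs_norm_graphPt_sub_norm_graphPt_le i (sphereGraph s r b c + u) b c
    (sphereGraph s r b c) b c
  rw [norm_graphPt_sphereGraph i hs hr h] at hdist
  exact hdist.trans (by simpa using hu)

/-- In the direction of a maximal coordinate `u` the sphere stays uniformly non-vertical over a box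
of side `r / 20`. -/
lemma sq_le_sub_sub_of_mem_Icc {u b₀ c₀ : ℝ} (hr₀ : 0 ≤ r) (hr : r ^ 2 = u ^ 2 + b₀ ^ 2 + c₀ ^ 2)
    (hu : r ^ 2 ≤ 3 * u ^ 2) (hb : b ∈ Icc b₀ (b₀ + r / 20)) (hc : c ∈ Icc c₀ (c₀ + r / 20)) :
    (r / 20) ^ 2 ≤ r ^ 2 - b ^ 2 - c ^ 2 := by
  have sq_le : ∀ {a x : ℝ}, a ^ 2 ≤ r ^ 2 → x ∈ Icc a (a + r / 20) →
      x ^ 2 ≤ a ^ 2 + r ^ 2 / 10 + r ^ 2 / 400 := fun {a x} ha hx => by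
    have har : a ≤ r := le_of_sq_le_sq ha hr₀
    have hlin : (x - a) * a ≤ r / 20 * r := by nlinarith [hx.1, hx.2]
    have hsq : (x - a) ^ 2 ≤ (r / 20) ^ 2 :=
      pow_le_pow_left₀ (by linarith [hx.1]) (by linarith [hx.2]) 2
    nlinarith
  have hb2 := sq_le (by nlinarith [sq_nonneg u, sq_nonneg c₀]) hb
  have hc2 := sq_le (by nlinarith [sq_nonneg u, sq_nonneg b₀]) hc
  nlinarith

lemma exists_norm_sq_le_three_mul_sq (y : ℝ³) : ∃ i, ‖y‖ ^ 2 ≤ 3 * y i ^ 2 := by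
  obtain ⟨i, -, hi⟩ := exists_max_image univ (fun i => y i ^ 2) univ_nonempty
  refine ⟨i, ?_⟩
  simpa [EuclideanSpace.norm_sq_eq] using sum_le_card_nsmul _ _ _ hi

lemma energyDensity_le_lintegral_shell_sphere (hφ : ContDiff ℝ (k + 4 : ℕ) φ) (ht : 0 ≤ t)
    {y : ℝ³} (hy : y ≠ 0) :
    ENNReal.ofReal (energyDensity φ k (pt t y)) ≤
      ENNReal.ofReal (273 ^ 3 / ((‖y‖ / 20) ^ 2 * ((1 + |‖y‖ - t|) / 6))) *
        ∫⁻ z in shell ‖y‖ ((1 + |‖y‖ - t|) / 2),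
          ENNReal.ofReal (energyDensity φ (k + 3) (pt t z)) := by
  set r := ‖y‖
  have hr : 0 < r := norm_pos_iff.2 hy
  obtain ⟨i, hi⟩ := exists_norm_sq_le_three_mul_sq y
  set b₀ := y (i.succAbove 0)
  set c₀ := y (i.succAbove 1)
  have hcoords : graphPt i (y i) b₀ c₀ = y := graphPt_apply_coords i y
  have hr2 : r ^ 2 = y i ^ 2 + b₀ ^ 2 + c₀ ^ 2 := by rw [← norm_graphPt_sq i, hcoords]
  obtain ⟨s, hs, hsy⟩ : ∃ s : ℝ, s ^ 2 = 1 ∧ s * |y i| = y i := by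
    rcases abs_choice (y i) with h | h
    · exact ⟨1, by norm_num, by rw [one_mul, h]⟩
    · exact ⟨-1, by norm_num, by rw [h]; ring⟩
  have hψ₀ : sphereGraph s r b₀ c₀ = y i := by
    rw [sphereGraph, show r ^ 2 - b₀ ^ 2 - c₀ ^ 2 = y i ^ 2 by linarith, Real.sqrt_sq_eq_abs, hsy]
  have hbox : ∀ b ∈ Icc b₀ (b₀ + r / 20), ∀ c ∈ Icc c₀ (c₀ + r / 20),
      (r / 20) ^ 2 ≤ r ^ 2 - b ^ 2 - c ^ 2 := fun b hb c hc =>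
    sq_le_sub_sub_of_mem_Icc hr.le hr2 hi hb hc
  have hL : 0 < r / 20 := by positivity
  have hmem : ∀ b ∈ Icc b₀ (b₀ + r / 20), ∀ c ∈ Icc c₀ (c₀ + r / 20),
      ∀ u ∈ Icc 0 ((1 + |r - t|) / 6),
      graphPt i (sphereGraph s r b c + u) b c ∈ shell r ((1 + |r - t|) / 2) :=
    fun b hb c hc u hu =>
    graphPt_sphereGraph_add_mem_shell i hs hr.le ((sq_nonneg _).trans (hbox b hb c hc))
      (by rw [abs_of_nonneg hu.1]; linarith [hu.1, hu.2])
  have hc₀ : c₀ ∈ Icc c₀ (c₀ + r / 20) := ⟨le_rfl, by linarith⟩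
  have hgraph := energyDensity_le_lintegral_shell_of_graph hφ ht i hL
    (controlledCurve_sphereGraph_left i t hs hL fun b hb => hbox b hb c₀ hc₀)
    (fun b hb => controlledCurve_sphereGraph_right i t hs hL fun c hc => hbox b hb c hc) hmem
  rwa [hψ₀, hcoords, ← sq] at hgraph

end Sphere

section KlainermanSobolev

variable {φ : (Fin 4 → ℝ) → ℝ} {k : ℕ} {t : ℝ} {y : ℝ³} {w : ℝ → ℝ}

/-- The absolute constant of the local Klainerman–Sobolev inequality: a factor `273` for each of
the three one-dimensional Sobolev inequalities, and `86400 = 20² · 6 · 6²` from the side lengths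
`|y| / 20` and `(1 + |q|) / 6` when `1 + t + |q| ≤ 6 |y|`. -/
noncomputable def sobolevConst : ℝ := 273 ^ 3 * 86400

lemma sobolevConst_pos : 0 < sobolevConst := by norm_num [sobolevConst]

/-- Away from the light cone a cube of side `1 + |q|` suffices; near it `|y|` is comparable to
`1 + t + |q|`, and the rotations control angular directions on that larger scale. -/
lemma energyDensity_le_lintegral_shell (hφ : ContDiff ℝ (k + 4 : ℕ) φ) (ht : 0 ≤ t) (y : ℝ³) :
    ENNReal.ofReal (energyDensity φ k (pt t y)) ≤
      ENNReal.ofReal (sobolevConst / ((1 + t + |‖y‖ - t|) ^ 2 * (1 + |‖y‖ - t|))) *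
        ∫⁻ z in shell ‖y‖ ((1 + |‖y‖ - t|) / 2),
          ENNReal.ofReal (energyDensity φ (k + 3) (pt t z)) := by
  have hR : 0 < 1 + t + |‖y‖ - t| := by positivity
  set Q := 1 + |‖y‖ - t|
  set R := 1 + t + |‖y‖ - t|
  have hQ : 0 < Q := by positivity
  rcases le_or_gt R (6 * Q) with hRQ | hRQ
  · refine (energyDensity_le_lintegral_shell_flat hφ ht y).trans
      (mul_le_mul_left (ENNReal.ofReal_le_ofReal ?_) _)
    calc 273 ^ 3 / (Q / 6) ^ 3 = 273 ^ 3 * 7776 / ((6 * Q) ^ 2 * Q) := by field_simp; norm_num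
      _ ≤ sobolevConst / (R ^ 2 * Q) := by rw [sobolevConst]; gcongr; norm_num
  · have hRy : R ≤ 6 * ‖y‖ := by
      rcases abs_cases (‖y‖ - t) with h | h <;> linarith
    have hy_pos : 0 < ‖y‖ := by linarith
    refine (energyDensity_le_lintegral_shell_sphere hφ ht (norm_pos_iff.1 hy_pos)).trans
      (mul_le_mul_left (ENNReal.ofReal_le_ofReal ?_) _)
    calc 273 ^ 3 / ((‖y‖ / 20) ^ 2 * (Q / 6)) = sobolevConst / ((6 * ‖y‖) ^ 2 * Q) := by
          rw [sobolevConst]; field_simp; norm_num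
      _ ≤ sobolevConst / (R ^ 2 * Q) := by
          have := sobolevConst_pos
          gcongr

lemma mul_energyDensity_le_lintegral (hφ : ContDiff ℝ (k + 4 : ℕ) φ) (ht : 0 ≤ t) {V : ℝ}
    (hV : ∀ q, |q - (‖y‖ - t)| ≤ (1 + |‖y‖ - t|) / 2 → V ≤ w q) :
    ENNReal.ofReal V * ENNReal.ofReal (energyDensity φ k (pt t y)) ≤
      ENNReal.ofReal (sobolevConst / ((1 + t + |‖y‖ - t|) ^ 2 * (1 + |‖y‖ - t|))) *
        ∫⁻ z : ℝ³, ENNReal.ofReal (w (‖z‖ - t)) *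
          ENNReal.ofReal (energyDensity φ (k + 3) (pt t z)) := by
  refine (mul_le_mul_right (energyDensity_le_lintegral_shell hφ ht y) _).trans ?_
  rw [mul_left_comm, ← lintegral_const_mul' _ _ ENNReal.ofReal_ne_top]
  refine mul_le_mul_right ((setLIntegral_mono' (measurableSet_shell _ _) fun z hz => ?_).trans
    (setLIntegral_le_lintegral _ _)) _
  exact mul_le_mul_left (ENNReal.ofReal_le_ofReal (hV _ (by rwa [sub_sub_sub_cancel_right]))) _

/-- The energy norm `∑_{|I| ≤ N} ‖√(w(|·| - t)) |∂ Z^I φ|(t, ·)‖_{L²(ℝ³)}` for a general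
weight `w`. -/
noncomputable def weightedEnergyNorm (w : ℝ → ℝ) (φ : (Fin 4 → ℝ) → ℝ) (N : ℕ) (t : ℝ) :
    ENNReal :=
  ∑ k : Fin (N + 1), ∑ ι : Fin (k : ℕ) → LIdx,
    eLpNorm (fun y : ℝ³ => √(w (‖y‖ - t)) * gradNorm (applyVec ι φ) (pt t y)) 2 volume

lemma lintegral_mul_gradSq_le (w : ℝ → ℝ) (g : (Fin 4 → ℝ) → ℝ) (t : ℝ) :
    ∫⁻ y : ℝ³, ENNReal.ofReal (w (‖y‖ - t)) * ENNReal.ofReal (gradSq g (pt t y)) ≤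
      4 * eLpNorm (fun y : ℝ³ => √(w (‖y‖ - t)) * gradNorm g (pt t y)) 2 volume ^ 2 := by
  have sq_eLpNorm : eLpNorm (fun y : ℝ³ => √(w (‖y‖ - t)) * gradNorm g (pt t y)) 2 volume ^ 2 =
      ∫⁻ y : ℝ³, ‖√(w (‖y‖ - t)) * gradNorm g (pt t y)‖ₑ ^ 2 := by
    simpa using eLpNorm_nnreal_pow_eq_lintegral
      (f := fun y : ℝ³ => √(w (‖y‖ - t)) * gradNorm g (pt t y)) (μ := volume) two_ne_zero
  rw [sq_eLpNorm, ← lintegral_const_mul' _ _ (by finiteness)]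
  refine lintegral_mono fun y => ?_
  have hgrad : ENNReal.ofReal (gradSq g (pt t y)) ≤ 4 * ‖gradNorm g (pt t y)‖ₑ ^ 2 := by
    rw [Real.enorm_of_nonneg (gradNorm_nonneg g _), ← ENNReal.ofReal_pow (gradNorm_nonneg g _),
      ← ENNReal.ofReal_ofNat 4, ← ENNReal.ofReal_mul (by norm_num)]
    exact ENNReal.ofReal_le_ofReal (gradSq_le g _)
  have hweight : ‖√(w (‖y‖ - t))‖ₑ ^ 2 = ENNReal.ofReal (w (‖y‖ - t)) := by
    rw [Real.enorm_of_nonneg (Real.sqrt_nonneg _), ← ENNReal.ofReal_pow (Real.sqrt_nonneg _)]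
    rcases le_total 0 (w (‖y‖ - t)) with h | h
    · rw [Real.sq_sqrt h]
    · simp [Real.sqrt_eq_zero_of_nonpos h, ENNReal.ofReal_of_nonpos h]
  calc _ ≤ ENNReal.ofReal (w (‖y‖ - t)) * (4 * ‖gradNorm g (pt t y)‖ₑ ^ 2) :=
        mul_le_mul_right hgrad _
    _ = 4 * ‖√(w (‖y‖ - t)) * gradNorm g (pt t y)‖ₑ ^ 2 := by
        rw [← hweight, mul_left_comm, ← mul_pow, enorm_mul]

lemma lintegral_mul_energyDensity_le {N : ℕ} (hw : Measurable w) (hφ : ContDiff ℝ (N + 1 : ℕ) φ)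
    (t : ℝ) :
    ∫⁻ y : ℝ³, ENNReal.ofReal (w (‖y‖ - t)) * ENNReal.ofReal (energyDensity φ N (pt t y)) ≤
      4 * weightedEnergyNorm w φ N t ^ 2 := by
  have hmeas : ∀ m ∈ range (N + 1), ∀ ι : Fin m → LIdx, Measurable fun y : ℝ³ =>
      ENNReal.ofReal (w (‖y‖ - t)) * ENNReal.ofReal (gradSq (applyVec ι φ) (pt t y)) :=
    fun m hm ι => by
      have hsmooth : ContDiff ℝ ((0 + 1 : ℕ) + m) φ := hφ.of_le (by
        exact_mod_cast (by have := mem_range.1 hm; omega : 0 + 1 + m ≤ N + 1))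
      have hcont := (contDiff_gradSq (n := 0) (contDiff_applyVec hsmooth ι)).continuous
      exact (hw.comp (by fun_prop)).ennreal_ofReal.mul
        (hcont.comp (continuous_pt t)).measurable.ennreal_ofReal
  have hsum : ∀ y : ℝ³, ENNReal.ofReal (energyDensity φ N (pt t y)) =
      ∑ m ∈ range (N + 1), ∑ ι : Fin m → LIdx,
        ENNReal.ofReal (gradSq (applyVec ι φ) (pt t y)) := fun y => by
    rw [energyDensity, ENNReal.ofReal_sum_of_nonneg
      fun _ _ => sum_nonneg fun _ _ => gradSq_nonneg _ _]
    exact sum_congr rfl fun _ _ => ENNReal.ofReal_sum_of_nonneg fun _ _ => gradSq_nonneg _ _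
  simp only [hsum, mul_sum]
  rw [lintegral_finsetSum' _ fun m hm =>
    (Finset.measurable_fun_sum _ fun ι _ => hmeas m hm ι).aemeasurable]
  calc _ ≤ ∑ m ∈ range (N + 1), ∑ ι : Fin m → LIdx, 4 *
        eLpNorm (fun y : ℝ³ => √(w (‖y‖ - t)) * gradNorm (applyVec ι φ) (pt t y)) 2 volume ^ 2 := by
        refine sum_le_sum fun m hm => ?_
        rw [lintegral_finsetSum _ fun ι _ => hmeas m hm ι]
        exact sum_le_sum fun ι _ => lintegral_mul_gradSq_le w _ t
    _ ≤ 4 * weightedEnergyNorm w φ N t ^ 2 := by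
        simp only [← mul_sum]
        refine mul_le_mul_right ?_ _
        rw [sum_range fun m => ∑ ι : Fin m → LIdx, eLpNorm (fun y : ℝ³ =>
          √(w (‖y‖ - t)) * gradNorm (applyVec ι φ) (pt t y)) 2 volume ^ 2]
        exact (sum_le_sum fun m _ => sum_sq_le_sq_sum_of_nonneg fun _ _ => zero_le).trans
          (sum_sq_le_sq_sum_of_nonneg fun _ _ => zero_le)

lemma mul_gradNorm_sq_le {N : ℕ} {ε V : ℝ} (hw : Measurable w) (hφ : ContDiff ℝ (N + 1 : ℕ) φ)
    (ht : 0 ≤ t) (hε : 0 ≤ ε) (henergy : weightedEnergyNorm w φ N t ≤ ENNReal.ofReal ε)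
    (hk : k + 3 ≤ N) (ι : Fin k → LIdx) (hV₀ : 0 ≤ V)
    (hV : ∀ q, |q - (‖y‖ - t)| ≤ (1 + |‖y‖ - t|) / 2 → V ≤ w q) :
    V * gradNorm (applyVec ι φ) (pt t y) ^ 2 ≤
      4 * sobolevConst * ε ^ 2 / ((1 + t + |‖y‖ - t|) ^ 2 * (1 + |‖y‖ - t|)) := by
  have hconst : 0 ≤ sobolevConst / ((1 + t + |‖y‖ - t|) ^ 2 * (1 + |‖y‖ - t|)) :=
    div_nonneg sobolevConst_pos.le (by positivity)
  have hsmooth : ContDiff ℝ (k + 4 : ℕ) φ := hφ.of_le (Nat.cast_le.2 (by omega))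
  have hint : ∫⁻ z : ℝ³, ENNReal.ofReal (w (‖z‖ - t)) *
      ENNReal.ofReal (energyDensity φ (k + 3) (pt t z)) ≤ ENNReal.ofReal (4 * ε ^ 2) := calc
    _ ≤ ∫⁻ z : ℝ³, ENNReal.ofReal (w (‖z‖ - t)) *
          ENNReal.ofReal (energyDensity φ N (pt t z)) := lintegral_mono fun z =>
        mul_le_mul_right (ENNReal.ofReal_le_ofReal (energyDensity_mono φ _ hk)) _
    _ ≤ 4 * weightedEnergyNorm w φ N t ^ 2 := lintegral_mul_energyDensity_le hw hφ t
    _ ≤ 4 * ENNReal.ofReal ε ^ 2 := by gcongr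
    _ = ENNReal.ofReal (4 * ε ^ 2) := by
        rw [ENNReal.ofReal_mul (by norm_num), ENNReal.ofReal_pow hε, ENNReal.ofReal_ofNat]
  have hsob := (mul_energyDensity_le_lintegral hsmooth ht hV).trans (mul_le_mul_right hint _)
  rw [← ENNReal.ofReal_mul hV₀, ← ENNReal.ofReal_mul hconst,
    ENNReal.ofReal_le_ofReal_iff (by positivity)] at hsob
  calc V * gradNorm (applyVec ι φ) (pt t y) ^ 2 ≤ V * energyDensity φ k (pt t y) :=
        mul_le_mul_of_nonneg_left (gradNorm_sq_le_energyDensity φ ι _) hV₀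
    _ ≤ _ := hsob
    _ = _ := by ring

lemma gradNorm_le_of_rpow_le_weight {N : ℕ} {ε K s : ℝ} (hw : Measurable w)
    (hφ : ContDiff ℝ (N + 1 : ℕ) φ) (ht : 0 ≤ t) (hε : 0 ≤ ε)
    (henergy : weightedEnergyNorm w φ N t ≤ ENNReal.ofReal ε) (hk : k + 3 ≤ N) (ι : Fin k → LIdx)
    (hK : 0 < K)
    (hs : ∀ q, |q - (‖y‖ - t)| ≤ (1 + |‖y‖ - t|) / 2 → (1 + |‖y‖ - t|) ^ s ≤ K * w q) :
    gradNorm (applyVec ι φ) (pt t y) ≤ √(4 * sobolevConst * K) * ε * (1 + t + |‖y‖ - t|)⁻¹ *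
      (1 + |‖y‖ - t|) ^ (-((1 + s) / 2)) := by
  have hbound := mul_gradNorm_sq_le (V := (1 + |‖y‖ - t|) ^ s / K) hw hφ ht hε henergy hk ι
    (by positivity) fun q hq => (div_le_iff₀' hK).2 (hs q hq)
  set Q := 1 + |‖y‖ - t|
  have hQ : 0 < Q := by positivity
  have hconst := sobolevConst_pos
  have hrpow : (Q ^ (-((1 + s) / 2))) ^ 2 = (Q * Q ^ s)⁻¹ := by
    rw [← Real.rpow_natCast, ← Real.rpow_mul hQ.le, Nat.cast_two, neg_mul,
      div_mul_cancel₀ _ two_ne_zero, Real.rpow_neg hQ.le, Real.rpow_add hQ, Real.rpow_one]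
  refine le_of_sq_le_sq ?_ (by positivity)
  rw [mul_pow, mul_pow, mul_pow, Real.sq_sqrt (by positivity), hrpow]
  calc gradNorm (applyVec ι φ) (pt t y) ^ 2
      = K / Q ^ s * (Q ^ s / K * gradNorm (applyVec ι φ) (pt t y) ^ 2) := by field_simp
    _ ≤ K / Q ^ s * (4 * sobolevConst * ε ^ 2 / ((1 + t + |‖y‖ - t|) ^ 2 * Q)) := by gcongr
    _ = _ := by field_simp

end KlainermanSobolev

section Weight

lemma one_le_wgt (γ μ q : ℝ) : 1 ≤ wgt γ μ q := by
  unfold wgt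
  split_ifs <;> exact le_add_of_nonneg_right (by positivity)

lemma measurable_wgt (γ μ : ℝ) : Measurable (wgt γ μ) :=
  Measurable.ite measurableSet_Ici (by fun_prop) (by fun_prop)

lemma rpow_le_mul_wgt (γ μ : ℝ) {q q' : ℝ} (hq : 0 ≤ q) (hqq' : |q' - q| ≤ (1 + |q|) / 2) :
    (1 + |q|) ^ (1 + 2 * γ) ≤ 2 ^ |1 + 2 * γ| * wgt γ μ q' := by
  have hw := one_le_wgt γ μ q'
  have htwo : (1 : ℝ) ≤ 2 ^ |1 + 2 * γ| := Real.one_le_rpow one_le_two (abs_nonneg _)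
  rw [abs_of_nonneg hq] at hqq' ⊢
  rcases le_total (1 + 2 * γ) 0 with hs | hs
  · exact (Real.rpow_le_one_of_one_le_of_nonpos (by linarith) hs).trans
      (one_le_mul_of_one_le_of_one_le htwo hw)
  rw [abs_of_nonneg hs] at htwo ⊢
  have hqle : 1 + q ≤ 2 * (1 + q') := by linarith [(abs_le.1 hqq').1]
  rcases le_or_gt 0 q' with hq' | hq'
  · calc (1 + q) ^ (1 + 2 * γ) ≤ (2 * (1 + q')) ^ (1 + 2 * γ) := by gcongr
      _ = 2 ^ (1 + 2 * γ) * (1 + q') ^ (1 + 2 * γ) := Real.mul_rpow zero_le_two (by linarith)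
      _ ≤ 2 ^ (1 + 2 * γ) * wgt γ μ q' := by
        rw [wgt, if_pos hq', abs_of_nonneg hq']
        gcongr
        exact le_add_of_nonneg_left zero_le_one
  · calc (1 + q) ^ (1 + 2 * γ) ≤ 2 ^ (1 + 2 * γ) := by gcongr; linarith
      _ ≤ 2 ^ (1 + 2 * γ) * wgt γ μ q' := le_mul_of_one_le_right (by positivity) hw

end Weight

theorem weighted_decay_estimate_general (γ : ℝ) :
    ∃ C > (0 : ℝ), ∀ (N : ℕ) (μ t : ℝ), 0 ≤ t → ∀ ε ≥ (0 : ℝ), ∀ φ : (Fin 4 → ℝ) → ℝ,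
      ContDiff ℝ (N + 1 : ℕ) φ →
      weightedEnergyNorm (wgt γ μ) φ N t ≤ ENNReal.ofReal ε →
      ∀ k : ℕ, k + 3 ≤ N → ∀ (ι : Fin k → LIdx) (y : ℝ³),
        (0 ≤ ‖y‖ - t →
          gradNorm (applyVec ι φ) (pt t y) ≤
            C * ε * (1 + t + |‖y‖ - t|)⁻¹ * (1 + |‖y‖ - t|) ^ (-(1 + γ))) ∧
        gradNorm (applyVec ι φ) (pt t y) ≤
          C * ε * (1 + t + |‖y‖ - t|)⁻¹ * (1 + |‖y‖ - t|) ^ (-(1 / 2) : ℝ) := by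
  have hK : (0 : ℝ) < 2 ^ |1 + 2 * γ| := by positivity
  refine ⟨√(4 * sobolevConst * 2 ^ |1 + 2 * γ|), by have := sobolevConst_pos; positivity,
    fun N μ t ht ε hε φ hφ henergy k hk ι y => ?_⟩
  have decay {s : ℝ} := gradNorm_le_of_rpow_le_weight (s := s) (y := y) (measurable_wgt γ μ) hφ ht
    hε henergy hk ι hK
  constructor
  · intro hq
    have h := decay fun q hqq => rpow_le_mul_wgt γ μ hq hqq
    rwa [show (1 + (1 + 2 * γ)) / 2 = 1 + γ by ring] at h
  · have h := decay (s := 0) fun q _ => by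
      rw [Real.rpow_zero]
      exact one_le_mul_of_one_le_of_one_le (Real.one_le_rpow one_le_two (abs_nonneg _))
        (one_le_wgt γ μ q)
    rwa [add_zero] at h

/-- Weighted Klainerman–Sobolev decay estimate: if the weighted `L²` norms of `∂ Z^I φ` for
`|I| ≤ N` are at most `ε` at each time `t ∈ [0,T)`, and `φ(·,t)` is Schwartz in `x`, then for
`|I| ≤ N - 3`, `|∂ Z^I φ| ≲ ε (1+t+|q|)⁻¹ (1+|q|)^{-1-γ}` when `q > 0` and
`≲ ε (1+t+|q|)⁻¹ (1+|q|)^{-1/2}` when `q < 0`, where `q = |x| - t`. -/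
theorem weighted_decay_estimate
    (N : ℕ) (hN : 4 ≤ N) (γ μ : ℝ)
    (hγ : γ ∈ Set.Ioo (0 : ℝ) (1 / 2)) (hμ : μ ∈ Set.Ioo (0 : ℝ) (1 / 2)) :
    ∃ C > (0 : ℝ), ∀ T > (0 : ℝ), ∀ ε > (0 : ℝ), ∀ φ : (Fin 4 → ℝ) → ℝ,
      ContDiff ℝ (⊤ : ℕ∞) φ →
      (∀ t : ℝ, 0 ≤ t → t < T →
        ∃ ψ : SchwartzMap (EuclideanSpace ℝ (Fin 3)) ℝ, ∀ y, ψ y = φ (pt t y)) →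
      (∀ t : ℝ, 0 ≤ t → t < T →
        ∑ k : Fin (N + 1), ∑ ι : Fin (k : ℕ) → LIdx,
          eLpNorm (fun y : EuclideanSpace ℝ (Fin 3) =>
            Real.sqrt (wgt γ μ (‖y‖ - t)) * gradNorm (applyVec ι φ) (pt t y)) 2 volume
          ≤ ENNReal.ofReal ε) →
      ∀ k : ℕ, k ≤ N - 3 → ∀ ι : Fin k → LIdx,
        ∀ (t : ℝ) (y : EuclideanSpace ℝ (Fin 3)), 0 ≤ t → t < T →
          (0 < ‖y‖ - t →
            gradNorm (applyVec ι φ) (pt t y) ≤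
              C * ε * (1 + t + |‖y‖ - t|)⁻¹ * (1 + |‖y‖ - t|) ^ (-(1 + γ))) ∧
          (‖y‖ - t < 0 →
            gradNorm (applyVec ι φ) (pt t y) ≤
              C * ε * (1 + t + |‖y‖ - t|)⁻¹ * (1 + |‖y‖ - t|) ^ (-(1 / 2) : ℝ)) := by
  obtain ⟨C, hC, hdecay⟩ := weighted_decay_estimate_general γ
  exact ⟨C, hC, fun T _ ε hε φ hφ _ henergy k hk ι t y ht htT =>
    (hdecay N μ t ht ε hε.le φ (hφ.of_le (by exact_mod_cast le_top)) (henergy t ht htT) k (by omega)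
      ι y).imp (fun h hq => h hq.le) fun h _ => h⟩
end

section
/- Fix γ ∈ (0,1/2). There is a constant C = C(γ) > 0 with the following property. Let ε > 0 and let φ : ℝ³ × [0,∞) → ℝ be continuously differentiable, with space-time gradient ∂φ, such that: (i) |∂φ(x,s)| ≤ ε (1 + s + |x|)^{-1} (1 + (|x| − s))^{-1-γ} for all (x,s) with |x| ≥ s; (ii) |∂φ(x,s)| ≤ ε (1 + s + |x|)^{-1} (1 + (s − |x|))^{-1/2} for all (x,s) with |x| < s; (iii) |φ(x,0)| ≤ ε (1 + |x|)^{-1-γ} for all x. Then for every (x,t) with t ≥ 0, setting q := |x| − t: |φ(x,t)| ≤ C ε (1 + t + |q|)^{-1} (1 + |q|)^{-γ} if q ≥ 0, and |φ(x,t)| ≤ C ε (1 + t + |q|)^{-1} (1 + |q|)^{1/2} if q < 0. -/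
/-- The pointwise norm `|∂φ| = max` of the four space-time partial derivatives of a function
`φ : ℝ³ × ℝ → ℝ`. -/
noncomputable def gradNormP (φ : EuclideanSpace ℝ (Fin 3) × ℝ → ℝ)
    (p : EuclideanSpace ℝ (Fin 3) × ℝ) : ℝ :=
  max |fderiv ℝ φ p (0, 1)|
    (Finset.univ.sup' Finset.univ_nonempty
      (fun i : Fin 3 => |fderiv ℝ φ p (EuclideanSpace.single i 1, 0)|))

/-!
On the incoming null line `s ↦ ((R - s) • w, s)`, `‖w‖ = 1`, the sum `s + |x| = R` is constant, so
the gradient bound is `(1 + R)⁻¹` times a power of `1 + |q|`, `q = R - 2 * s`, which is affine in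
`s` on either side of the light cone `s = R / 2`. Integrating `(1 + q) ^ (-(1 + γ))` from the
initial hyperplane up to the cone gives `(1 + q) ^ (-γ)`, and integrating `(1 + |q|) ^ (-β)` from
there on gives `(1 + |q|) ^ (1 - β)`; the factor `(1 + R)⁻¹` is carried along.
-/

open Set

section MeanValue

variable {F : Type*} [NormedAddCommGroup F] [NormedSpace ℝ F] {a b : ℝ}

lemma norm_image_sub_le_image_sub_of_norm_deriv_le {g g' : ℝ → F} {B B' : ℝ → ℝ} (hab : a ≤ b)
    (hg : ∀ s ∈ Icc a b, HasDerivWithinAt g (g' s) (Icc a b) s)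
    (hB : ∀ s ∈ Icc a b, HasDerivWithinAt B (B' s) (Icc a b) s)
    (bound : ∀ s ∈ Ico a b, ‖g' s‖ ≤ B' s) :
    ‖g b - g a‖ ≤ B b - B a :=
  image_norm_le_of_norm_deriv_right_le_deriv_boundary'
    (f := fun s ↦ g s - g a) (B := fun s ↦ B s - B a)
    (fun s hs ↦ ((hg s hs).sub_const (g a)).continuousWithinAt)
    (fun s hs ↦ ((hg s (Ico_subset_Icc_self hs)).sub_const (g a)).mono_of_mem_nhdsWithin
      (Icc_mem_nhdsGE_of_mem hs))
    (by simp)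
    (fun s hs ↦ ((hB s hs).sub_const (B a)).continuousWithinAt)
    (fun s hs ↦ ((hB s (Ico_subset_Icc_self hs)).sub_const (B a)).mono_of_mem_nhdsWithin
      (Icc_mem_nhdsGE_of_mem hs))
    bound (right_mem_Icc.2 hab)

lemma norm_image_sub_le_of_norm_deriv_le_rpow_affine {g g' : ℝ → F} {K α c p : ℝ}
    (hc : c ≠ 0) (hp : p ≠ 0) (hab : a ≤ b) (hpos : ∀ s ∈ Icc a b, 0 < α + c * s)
    (hg : ∀ s ∈ Icc a b, HasDerivWithinAt g (g' s) (Icc a b) s)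
    (bound : ∀ s ∈ Ico a b, ‖g' s‖ ≤ K * (α + c * s) ^ (p - 1)) :
    ‖g b - g a‖ ≤ K / (c * p) * ((α + c * b) ^ p - (α + c * a) ^ p) := by
  have hB : ∀ s ∈ Icc a b, HasDerivWithinAt (fun s ↦ K / (c * p) * (α + c * s) ^ p)
      (K * (α + c * s) ^ (p - 1)) (Icc a b) s := fun s hs ↦ by
    have haffine : HasDerivAt (fun s ↦ α + c * s) c s := by
      simpa using ((hasDerivAt_id s).const_mul c).const_add α
    have hrpow := (haffine.rpow_const (p := p) (.inl (hpos s hs).ne')).const_mul (K / (c * p))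
    exact (hrpow.congr_deriv (by field_simp)).hasDerivWithinAt
  rw [mul_sub]
  exact norm_image_sub_le_image_sub_of_norm_deriv_le hab hg hB bound

end MeanValue

section NullLine

variable {E F : Type*} [NormedAddCommGroup E] [NormedSpace ℝ E]
  [NormedAddCommGroup F] [NormedSpace ℝ F] {φ : E × ℝ → F} {w : E} {R s t γ β δ ε A : ℝ}

/-- The null line `s ↦ (x, s)` in the direction `w` on which `s + |x| = R` and `x / |x| = w` are
constant, for `‖w‖ = 1` and as long as `s < R`; it is parametrised by time and reaches the spatial
origin at `s = R`. -/
def incomingNullLine (w : E) (R s : ℝ) : E × ℝ := ((R - s) • w, s)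

lemma exists_incomingNullLine_eq [Nontrivial E] (x : E) (t : ℝ) :
    ∃ w : E, ‖w‖ = 1 ∧ incomingNullLine w (t + ‖x‖) t = (x, t) := by
  obtain rfl | hx := eq_or_ne x 0
  · obtain ⟨w, hw⟩ := exists_norm_eq E zero_le_one
    exact ⟨w, hw, by simp [incomingNullLine]⟩
  · exact ⟨NormedSpace.normalize x, NormedSpace.norm_normalize hx, by simp [incomingNullLine]⟩

lemma norm_sub_smul_of_norm_eq_one (hw : ‖w‖ = 1) (hs : s ≤ R) : ‖(R - s) • w‖ = R - s := by
  rw [norm_smul, hw, mul_one, Real.norm_of_nonneg (sub_nonneg.2 hs)]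

lemma hasDerivAt_incomingNullLine (w : E) (R s : ℝ) :
    HasDerivAt (incomingNullLine w R) (-w, 1) s := by
  have hspace : HasDerivAt (fun s : ℝ ↦ (R - s) • w) (-w) s := by
    simpa using ((hasDerivAt_id s).const_sub R).smul_const w
  exact hspace.prodMk (hasDerivAt_id s)

lemma norm_sub_le_of_norm_fderiv_incomingNullLine_le {K α c p a b : ℝ}
    (hφ : Differentiable ℝ φ) (hw : ‖w‖ = 1) (hc : c ≠ 0) (hp : p ≠ 0) (hab : a ≤ b)
    (hpos : ∀ s ∈ Icc a b, 0 < α + c * s)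
    (bound : ∀ s ∈ Ico a b, ‖fderiv ℝ φ (incomingNullLine w R s)‖ ≤ K * (α + c * s) ^ (p - 1)) :
    ‖φ (incomingNullLine w R b) - φ (incomingNullLine w R a)‖ ≤
      K / (c * p) * ((α + c * b) ^ p - (α + c * a) ^ p) :=
  norm_image_sub_le_of_norm_deriv_le_rpow_affine (g := φ ∘ incomingNullLine w R) hc hp hab hpos
    (fun s _ ↦ ((hφ _).hasFDerivAt.comp_hasDerivAt s
      (hasDerivAt_incomingNullLine w R s)).hasDerivWithinAt)
    fun s hs ↦ (ContinuousLinearMap.unit_le_opNorm _ _ (by simp [hw])).trans (bound s hs)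

lemma norm_sub_incomingNullLine_le_of_exterior (hφ : Differentiable ℝ φ) (hw : ‖w‖ = 1)
    (hγ : γ ≠ 0)
    (hext : ∀ (x : E) (s : ℝ), 0 ≤ s → s ≤ ‖x‖ →
      ‖fderiv ℝ φ (x, s)‖ ≤ δ * (1 + s + ‖x‖)⁻¹ * (1 + (‖x‖ - s)) ^ (-(1 + γ)))
    (ht : 0 ≤ t) (htR : 2 * t ≤ R) :
    ‖φ (incomingNullLine w R t) - φ (incomingNullLine w R 0)‖ ≤
      δ * (1 + R)⁻¹ / (2 * γ) * ((1 + (R - 2 * t)) ^ (-γ) - (1 + R) ^ (-γ)) := by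
  have bound : ∀ s ∈ Ico 0 t, ‖fderiv ℝ φ (incomingNullLine w R s)‖ ≤
      δ * (1 + R)⁻¹ * (1 + R + -2 * s) ^ (-γ - 1) := by
    rintro s ⟨hs, hst⟩
    have hnorm := norm_sub_smul_of_norm_eq_one hw (show s ≤ R by linarith)
    have hs_ext := hext ((R - s) • w) s hs (by linarith)
    rw [hnorm] at hs_ext
    rw [incomingNullLine]
    convert hs_ext using 3 <;> ring
  convert norm_sub_le_of_norm_fderiv_incomingNullLine_le hφ hw (by norm_num : (-2 : ℝ) ≠ 0)
    (neg_ne_zero.2 hγ) ht (fun s hs ↦ by linarith [hs.2]) bound using 1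
  ring_nf

lemma norm_sub_incomingNullLine_le_of_interior (hφ : Differentiable ℝ φ) (hw : ‖w‖ = 1)
    (hβ : β ≠ 1)
    (hinter : ∀ (x : E) (s : ℝ), 0 ≤ s → ‖x‖ ≤ s →
      ‖fderiv ℝ φ (x, s)‖ ≤ δ * (1 + s + ‖x‖)⁻¹ * (1 + (s - ‖x‖)) ^ (-β))
    (hRt : R / 2 ≤ t) (htR : t ≤ R) :
    ‖φ (incomingNullLine w R t) - φ (incomingNullLine w R (R / 2))‖ ≤
      δ * (1 + R)⁻¹ / (2 * (1 - β)) * ((1 + (2 * t - R)) ^ (1 - β) - 1) := by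
  have bound : ∀ s ∈ Ico (R / 2) t, ‖fderiv ℝ φ (incomingNullLine w R s)‖ ≤
      δ * (1 + R)⁻¹ * (1 - R + 2 * s) ^ (1 - β - 1) := by
    rintro s ⟨hRs, hst⟩
    have hnorm := norm_sub_smul_of_norm_eq_one hw (show s ≤ R by linarith)
    have hs_int := hinter ((R - s) • w) s (by linarith) (by linarith)
    rw [hnorm] at hs_int
    rw [incomingNullLine]
    convert hs_int using 3 <;> ring
  convert norm_sub_le_of_norm_fderiv_incomingNullLine_le hφ hw two_ne_zero
    (sub_ne_zero.2 hβ.symm) hRt (fun s hs ↦ by linarith [hs.1]) bound using 3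
  · ring_nf
  · simp [mul_div_cancel₀]

lemma norm_incomingNullLine_le_of_exterior (hφ : Differentiable ℝ φ) (hw : ‖w‖ = 1)
    (hγ : 0 < γ) (hε : 0 ≤ ε) (hδ : 0 ≤ δ)
    (hext : ∀ (x : E) (s : ℝ), 0 ≤ s → s ≤ ‖x‖ →
      ‖fderiv ℝ φ (x, s)‖ ≤ δ * (1 + s + ‖x‖)⁻¹ * (1 + (‖x‖ - s)) ^ (-(1 + γ)))
    (hinit : ∀ x : E, ‖φ (x, 0)‖ ≤ ε * (1 + ‖x‖) ^ (-(1 + γ)))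
    (ht : 0 ≤ t) (htR : 2 * t ≤ R) :
    ‖φ (incomingNullLine w R t)‖ ≤
      (ε + δ / (2 * γ)) * (1 + R)⁻¹ * (1 + (R - 2 * t)) ^ (-γ) := by
  have hR : 0 ≤ R := by linarith
  have hstart : ‖φ (incomingNullLine w R 0)‖ ≤ ε * (1 + R)⁻¹ * (1 + R) ^ (-γ) := by
    have h := hinit ((R - 0) • w)
    rw [norm_sub_smul_of_norm_eq_one hw hR, sub_zero, neg_add, Real.rpow_add (by positivity),
      Real.rpow_neg_one, ← mul_assoc] at h
    simpa [incomingNullLine] using h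
  have hmono : (1 + R) ^ (-γ) ≤ (1 + (R - 2 * t)) ^ (-γ) :=
    Real.rpow_le_rpow_of_nonpos (by linarith) (by linarith) (by linarith)
  calc ‖φ (incomingNullLine w R t)‖
      ≤ ‖φ (incomingNullLine w R 0)‖ +
          ‖φ (incomingNullLine w R t) - φ (incomingNullLine w R 0)‖ :=
        norm_le_norm_add_norm_sub' _ _
    _ ≤ ε * (1 + R)⁻¹ * (1 + R) ^ (-γ) +
          δ * (1 + R)⁻¹ / (2 * γ) * ((1 + (R - 2 * t)) ^ (-γ) - (1 + R) ^ (-γ)) :=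
        add_le_add hstart (norm_sub_incomingNullLine_le_of_exterior hφ hw hγ.ne' hext ht htR)
    _ ≤ ε * (1 + R)⁻¹ * (1 + (R - 2 * t)) ^ (-γ) +
          δ * (1 + R)⁻¹ / (2 * γ) * (1 + (R - 2 * t)) ^ (-γ) := by
        gcongr
        exact sub_le_self _ (by positivity)
    _ = (ε + δ / (2 * γ)) * (1 + R)⁻¹ * (1 + (R - 2 * t)) ^ (-γ) := by ring

lemma norm_incomingNullLine_le_of_interior (hφ : Differentiable ℝ φ) (hw : ‖w‖ = 1)
    (hβ : β < 1) (hδ : 0 ≤ δ)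
    (hinter : ∀ (x : E) (s : ℝ), 0 ≤ s → ‖x‖ ≤ s →
      ‖fderiv ℝ φ (x, s)‖ ≤ δ * (1 + s + ‖x‖)⁻¹ * (1 + (s - ‖x‖)) ^ (-β))
    (hcone : ‖φ (incomingNullLine w R (R / 2))‖ ≤ A * (1 + R)⁻¹)
    (hRt : R / 2 ≤ t) (htR : t ≤ R) :
    ‖φ (incomingNullLine w R t)‖ ≤
      (A + δ / (2 * (1 - β))) * (1 + R)⁻¹ * (1 + (2 * t - R)) ^ (1 - β) := by
  have hR : 0 ≤ R := by linarith
  have hβ_pos : 0 < 1 - β := sub_pos.2 hβ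
  have hone : 1 ≤ (1 + (2 * t - R)) ^ (1 - β) := Real.one_le_rpow (by linarith) hβ_pos.le
  calc ‖φ (incomingNullLine w R t)‖
      ≤ ‖φ (incomingNullLine w R (R / 2))‖ +
          ‖φ (incomingNullLine w R t) - φ (incomingNullLine w R (R / 2))‖ :=
        norm_le_norm_add_norm_sub' _ _
    _ ≤ A * (1 + R)⁻¹ + δ * (1 + R)⁻¹ / (2 * (1 - β)) * ((1 + (2 * t - R)) ^ (1 - β) - 1) :=
        add_le_add hcone (norm_sub_incomingNullLine_le_of_interior hφ hw hβ.ne hinter hRt htR)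
    _ ≤ A * (1 + R)⁻¹ * (1 + (2 * t - R)) ^ (1 - β) +
          δ * (1 + R)⁻¹ / (2 * (1 - β)) * (1 + (2 * t - R)) ^ (1 - β) :=
        add_le_add (le_mul_of_one_le_right ((norm_nonneg _).trans hcone) hone)
          (mul_le_mul_of_nonneg_left (by linarith) (by positivity))
    _ = (A + δ / (2 * (1 - β))) * (1 + R)⁻¹ * (1 + (2 * t - R)) ^ (1 - β) := by ring

lemma inv_one_add_add_le_two_mul_inv {r : ℝ} (ht : 0 ≤ t) (hr : 0 ≤ r) :
    (1 + (t + r))⁻¹ ≤ 2 * (1 + t + |r - t|)⁻¹ := by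
  have habs : |r - t| ≤ t + r := abs_le.2 ⟨by linarith, by linarith⟩
  rw [← div_eq_mul_inv, inv_eq_one_div, div_le_div_iff₀ (by positivity) (by positivity)]
  linarith

theorem decay_from_gradient_bound_general [Nontrivial E] (hγ : 0 < γ) (hβ : β < 1)
    (hφ : Differentiable ℝ φ)
    (hext : ∀ (x : E) (s : ℝ), 0 ≤ s → s ≤ ‖x‖ →
      ‖fderiv ℝ φ (x, s)‖ ≤ δ * (1 + s + ‖x‖)⁻¹ * (1 + (‖x‖ - s)) ^ (-(1 + γ)))
    (hinter : ∀ (x : E) (s : ℝ), 0 ≤ s → ‖x‖ < s →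
      ‖fderiv ℝ φ (x, s)‖ ≤ δ * (1 + s + ‖x‖)⁻¹ * (1 + (s - ‖x‖)) ^ (-β))
    (hinit : ∀ x : E, ‖φ (x, 0)‖ ≤ ε * (1 + ‖x‖) ^ (-(1 + γ))) (x : E) (ht : 0 ≤ t) :
    (0 ≤ ‖x‖ - t → ‖φ (x, t)‖ ≤
      (2 * ε + δ / γ + δ / (1 - β)) * (1 + t + |‖x‖ - t|)⁻¹ * (1 + |‖x‖ - t|) ^ (-γ)) ∧
    (‖x‖ - t < 0 → ‖φ (x, t)‖ ≤
      (2 * ε + δ / γ + δ / (1 - β)) * (1 + t + |‖x‖ - t|)⁻¹ * (1 + |‖x‖ - t|) ^ (1 - β)) := by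
  have hε : 0 ≤ ε := by simpa using (norm_nonneg _).trans (hinit 0)
  have hδ : 0 ≤ δ := by simpa using (norm_nonneg _).trans (hext 0 0 le_rfl (by simp))
  have hinter' : ∀ (x : E) (s : ℝ), 0 ≤ s → ‖x‖ ≤ s →
      ‖fderiv ℝ φ (x, s)‖ ≤ δ * (1 + s + ‖x‖)⁻¹ * (1 + (s - ‖x‖)) ^ (-β) :=
    fun x s hs hxs ↦ hxs.lt_or_eq.elim (hinter x s hs) fun h ↦ by simpa [h] using hext x s hs h.ge
  have hβ_pos : 0 < 1 - β := sub_pos.2 hβ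
  obtain ⟨w, hw, hline⟩ := exists_incomingNullLine_eq x t
  have hweight {A P : ℝ} (hA : A ≤ ε + δ / (2 * γ) + δ / (2 * (1 - β))) (hP : 0 ≤ P) :
      A * (1 + (t + ‖x‖))⁻¹ * P ≤
        (2 * ε + δ / γ + δ / (1 - β)) * (1 + t + |‖x‖ - t|)⁻¹ * P := calc
    _ ≤ (ε + δ / (2 * γ) + δ / (2 * (1 - β))) * (2 * (1 + t + |‖x‖ - t|)⁻¹) * P := by
      gcongr
      exact inv_one_add_add_le_two_mul_inv ht (norm_nonneg x)
    _ = _ := by field_simp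
  have hexterior {s : ℝ} := norm_incomingNullLine_le_of_exterior (R := t + ‖x‖) (t := s)
    hφ hw hγ hε hδ hext hinit
  rw [← hline]
  constructor <;> intro hq
  · have h := hexterior ht (by linarith)
    rw [show t + ‖x‖ - 2 * t = |‖x‖ - t| by rw [abs_of_nonneg hq]; ring] at h
    exact h.trans (hweight (le_add_of_nonneg_right (by positivity)) (by positivity))
  · have hcone := hexterior (s := (t + ‖x‖) / 2) (by positivity) (by linarith)
    rw [mul_div_cancel₀ _ two_ne_zero, sub_self, add_zero, Real.one_rpow, mul_one] at hcone
    have h := norm_incomingNullLine_le_of_interior hφ hw hβ hδ hinter' hcone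
      (t := t) (by linarith) (le_add_of_nonneg_right (norm_nonneg x))
    rw [show 2 * t - (t + ‖x‖) = |‖x‖ - t| by rw [abs_of_neg hq]; ring] at h
    exact h.trans (hweight le_rfl (by positivity))

end NullLine

section EuclideanGradient

variable {ι F : Type*} [Fintype ι] [DecidableEq ι] [NormedAddCommGroup F] [NormedSpace ℝ F]

lemma opNorm_le_norm_apply_add_sum_norm_apply_single (L : EuclideanSpace ℝ ι × ℝ →L[ℝ] F) :
    ‖L‖ ≤ ‖L (0, 1)‖ + ∑ i, ‖L (EuclideanSpace.single i 1, 0)‖ := by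
  refine L.opNorm_le_bound (by positivity) fun ⟨v, a⟩ ↦ ?_
  have hcoord (i : ι) : |v i| ≤ ‖(v, a)‖ := (PiLp.norm_apply_le v i).trans (norm_fst_le (v, a))
  have htime : |a| ≤ ‖(v, a)‖ := norm_snd_le (v, a)
  have hexpand : (v, a) = a • ((0 : EuclideanSpace ℝ ι), (1 : ℝ)) +
      ∑ i, v i • (EuclideanSpace.single i (1 : ℝ), (0 : ℝ)) := by
    have hv := (EuclideanSpace.basisFun ι ℝ).sum_repr v
    ext1
    · simpa [Prod.fst_sum] using hv.symm
    · simp [Prod.snd_sum]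
  calc ‖L (v, a)‖
      = ‖a • L (0, 1) + ∑ i, v i • L (EuclideanSpace.single i 1, 0)‖ := by
        conv_lhs => rw [hexpand]
        simp only [map_add, map_sum, map_smul]
    _ ≤ ‖a • L (0, 1)‖ + ∑ i, ‖v i • L (EuclideanSpace.single i 1, 0)‖ :=
        (norm_add_le _ _).trans (by gcongr; exact norm_sum_le _ _)
    _ ≤ ‖(v, a)‖ * ‖L (0, 1)‖ + ∑ i, ‖(v, a)‖ * ‖L (EuclideanSpace.single i 1, 0)‖ := by
        simp only [norm_smul, Real.norm_eq_abs]
        gcongr with i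
        exact hcoord i
    _ = _ := by rw [← Finset.mul_sum, ← mul_add, mul_comm]

end EuclideanGradient

lemma norm_fderiv_le_four_mul_gradNormP (φ : EuclideanSpace ℝ (Fin 3) × ℝ → ℝ)
    (p : EuclideanSpace ℝ (Fin 3) × ℝ) : ‖fderiv ℝ φ p‖ ≤ 4 * gradNormP φ p := by
  have htime : |fderiv ℝ φ p (0, 1)| ≤ gradNormP φ p := le_max_left _ _
  have hspace (i : Fin 3) : |fderiv ℝ φ p (EuclideanSpace.single i 1, 0)| ≤ gradNormP φ p :=
    le_max_of_le_right (Finset.le_sup'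
      (fun i : Fin 3 ↦ |fderiv ℝ φ p (EuclideanSpace.single i 1, 0)|) (Finset.mem_univ i))
  calc ‖fderiv ℝ φ p‖
      ≤ |fderiv ℝ φ p (0, 1)| + ∑ i, |fderiv ℝ φ p (EuclideanSpace.single i 1, 0)| :=
        opNorm_le_norm_apply_add_sum_norm_apply_single _
    _ ≤ gradNormP φ p + ∑ _i : Fin 3, gradNormP φ p :=
        add_le_add htime (Finset.sum_le_sum fun i _ ↦ hspace i)
    _ = 4 * gradNormP φ p := by rw [Fin.sum_univ_three]; ring

/-- Integrating a decaying gradient bound from the initial hyperplane along incoming null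
lines: if `|∂φ| ≤ ε (1+s+|x|)⁻¹ (1+(|x|-s))^{-1-γ}` for `|x| ≥ s ≥ 0`,
`|∂φ| ≤ ε (1+s+|x|)⁻¹ (1+(s-|x|))^{-1/2}` for `0 ≤ s > |x|`, and
`|φ(x,0)| ≤ ε (1+|x|)^{-1-γ}`, then `|φ| ≤ C ε (1+t+|q|)⁻¹ (1+|q|)^{-γ}` for `q ≥ 0` and
`|φ| ≤ C ε (1+t+|q|)⁻¹ (1+|q|)^{1/2}` for `q < 0`, where `q = |x| - t`. -/
theorem decay_from_gradient_bound
    (γ : ℝ) (hγ0 : 0 < γ) (hγ : γ < 1 / 2) :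
    ∃ C > (0 : ℝ), ∀ ε > (0 : ℝ), ∀ φ : EuclideanSpace ℝ (Fin 3) × ℝ → ℝ,
      ContDiff ℝ 1 φ →
      (∀ (x : EuclideanSpace ℝ (Fin 3)) (s : ℝ), 0 ≤ s → s ≤ ‖x‖ →
        gradNormP φ (x, s) ≤ ε * (1 + s + ‖x‖)⁻¹ * (1 + (‖x‖ - s)) ^ (-(1 + γ))) →
      (∀ (x : EuclideanSpace ℝ (Fin 3)) (s : ℝ), 0 ≤ s → ‖x‖ < s →
        gradNormP φ (x, s) ≤ ε * (1 + s + ‖x‖)⁻¹ * (1 + (s - ‖x‖)) ^ (-(1 / 2) : ℝ)) →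
      (∀ x : EuclideanSpace ℝ (Fin 3), |φ (x, 0)| ≤ ε * (1 + ‖x‖) ^ (-(1 + γ))) →
      ∀ (x : EuclideanSpace ℝ (Fin 3)) (t : ℝ), 0 ≤ t →
        (0 ≤ ‖x‖ - t →
          |φ (x, t)| ≤ C * ε * (1 + t + |‖x‖ - t|)⁻¹ * (1 + |‖x‖ - t|) ^ (-γ)) ∧
        (‖x‖ - t < 0 →
          |φ (x, t)| ≤ C * ε * (1 + t + |‖x‖ - t|)⁻¹ * (1 + |‖x‖ - t|) ^ ((1 / 2) : ℝ)) := by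
  refine ⟨2 + 4 / γ + 4 / (1 / 2), by positivity, fun ε _ φ hφ hext hinter hinit x t ht ↦ ?_⟩
  have hgrad {a b : ℝ} {p : EuclideanSpace ℝ (Fin 3) × ℝ} (hp : gradNormP φ p ≤ ε * a * b) :
      ‖fderiv ℝ φ p‖ ≤ 4 * ε * a * b := by
    linarith [norm_fderiv_le_four_mul_gradNormP φ p]
  have h := decay_from_gradient_bound_general hγ0 one_half_lt_one (hφ.differentiable one_ne_zero)
    (fun y s hs hsy ↦ hgrad (hext y s hs hsy)) (fun y s hs hys ↦ hgrad (hinter y s hs hys))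
    hinit x ht
  have hC : 2 * ε + 4 * ε / γ + 4 * ε / (1 / 2) = (2 + 4 / γ + 4 / (1 / 2)) * ε := by ring
  rwa [sub_half, hC] at h
end
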